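/- arXiv:0908.1885 — 2 statements merged into one kernel-verified Lean document; each statement's English description precedes it below -/
import Mathlib

section
/- Let p ≥ 1 be a real number, 0 < α < 1, and let L ≥ 1 be an integer. Let k̃ : ℝ × [0,∞) → ℝ be a smooth function, 2π-periodic in its first (angular) variable θ, with k̃(θ,τ) > 0 everywhere, satisfying the rescaled curve-shortening equation ∂k̃/∂τ = p·k̃^{1+1/p}·∂²k̃/∂θ² + p·k̃^{2+1/p} − p·k̃ on ℝ × (0,∞), and suppose sup_θ |k̃(θ,τ) − 1| → 0 as τ → ∞. Assume there is a constant C(L,p) > 0 such that for every l with 1 ≤ l ≤ L and all τ > 0: sup_θ |∂^l k̃/∂θ^l (θ,τ)| ≤ C(L,p)·exp(−2αp·τ), and also (∫₀^{2π} (∂^{L+1} k̃/∂θ^{L+1})² dθ)^{1/2} ≤ C(L,p)·exp(−2αp·τ) for all τ > 0. Then there exists a constant C(L+1,p) > 0 such that for all τ > 0: (∫₀^{2π} (∂^{L+2} k̃/∂θ^{L+2})² dθ)^{1/2} ≤ C(L+1,p)·exp(−2αp·τ), and consequently sup_θ |∂^{L+1} k̃/∂θ^{L+1} (θ,τ)|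 ≤ C(L+1,p)·exp(−2αp·τ) for all τ > 0. -/
open Real Filter Set

/-- A pointwise bound for the derivatives of `h ∘ u` when `u` takes values in a compact
subinterval of `(0, ∞)`. -/
lemma exists_abs_iteratedDeriv_comp_le_pow {h : ℝ → ℝ} (hh : ContDiffOn ℝ (⊤ : ℕ∞) h (Ioi 0))
    {c₀ : ℝ} (hc₀ : 0 < c₀) (c₁ : ℝ) (n : ℕ) :
    ∃ C : ℝ, 0 ≤ C ∧ ∀ u : ℝ → ℝ, ContDiff ℝ (⊤ : ℕ∞) u → (∀ x, u x ∈ Icc c₀ c₁) →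
      ∀ x D : ℝ, (∀ i, 1 ≤ i → i ≤ n → |iteratedDeriv i u x| ≤ D ^ i) →
        |iteratedDeriv n (h ∘ u) x| ≤ C * D ^ n := by
  have hb : ∀ i : ℕ, ∃ B : ℝ, ∀ y ∈ Icc c₀ c₁, ‖iteratedFDerivWithin ℝ i h (Ioi 0) y‖ ≤ B := by
    intro i
    have hc := hh.continuousOn_iteratedFDerivWithin (m := i) (by exact_mod_cast le_top)
      (uniqueDiffOn_Ioi 0)
    exact isCompact_Icc.exists_bound_of_continuousOn
      (hc.mono fun y hy => lt_of_lt_of_le hc₀ hy.1)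
  choose B hB using hb
  refine ⟨n.factorial * ∑ i ∈ Finset.range (n + 1), |B i|, by positivity, ?_⟩
  intro u hu hur x D hD
  have key := norm_iteratedFDerivWithin_comp_le (g := h) (f := u) (n := n) (s := univ)
    (t := Ioi 0) (x := x) hh hu.contDiffOn (by exact_mod_cast le_top) (uniqueDiffOn_Ioi 0)
    uniqueDiffOn_univ (fun y _ => lt_of_lt_of_le hc₀ (hur y).1) (mem_univ x)
    (C := ∑ i ∈ Finset.range (n + 1), |B i|) (D := D)
    (fun i hi => ((hB i _ (hur x)).trans (le_abs_self _)).trans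
      (Finset.single_le_sum (f := fun i => |B i|) (fun _ _ => abs_nonneg _)
        (Finset.mem_range.2 (by omega))))
    (fun i h1 h2 => by
      rw [iteratedFDerivWithin_univ, norm_iteratedFDeriv_eq_norm_iteratedDeriv]
      exact hD i h1 h2)
  rwa [iteratedFDerivWithin_univ, norm_iteratedFDeriv_eq_norm_iteratedDeriv] at key

/-- If the lower order derivatives of `u` are `O(e)` with `e ≤ 1` and the top one is `O(r)` with
`e ≤ r`, then the top derivative of `h ∘ u` is `O(r)`. -/
lemma exists_abs_iteratedDeriv_comp_le {h : ℝ → ℝ} (hh : ContDiffOn ℝ (⊤ : ℕ∞) h (Ioi 0))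
    {c₀ : ℝ} (hc₀ : 0 < c₀) (c₁ : ℝ) {M : ℝ} (hM : 1 ≤ M) {n : ℕ} (hn : 1 ≤ n) :
    ∃ C : ℝ, 0 ≤ C ∧ ∀ u : ℝ → ℝ, ContDiff ℝ (⊤ : ℕ∞) u → (∀ x, u x ∈ Icc c₀ c₁) →
      ∀ x e r : ℝ, 0 < e → e ≤ 1 → e ≤ r →
        (∀ i, 1 ≤ i → i < n → |iteratedDeriv i u x| ≤ M * e) → |iteratedDeriv n u x| ≤ M * r →
        |iteratedDeriv n (h ∘ u) x| ≤ C * r := by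
  obtain ⟨C, hC, H⟩ := exists_abs_iteratedDeriv_comp_le_pow hh hc₀ c₁ n
  refine ⟨C * M ^ n, by positivity, ?_⟩
  intro u hu hur x e r he he1 her hlow htop
  have hr : 0 < r := he.trans_le her
  have hn0 : (n : ℝ) ≠ 0 := by positivity
  have hroot : (r ^ (1 / (n : ℝ))) ^ n = r := by
    rw [← Real.rpow_natCast, ← Real.rpow_mul hr.le, one_div_mul_cancel hn0, Real.rpow_one]
  have key := H u hu hur x (M * r ^ (1 / (n : ℝ))) (fun i h1 h2 => by
    rw [mul_pow]
    rcases h2.lt_or_eq with h | h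
    · refine (hlow i h1 h).trans ?_
      have hMi : M ≤ M ^ i := le_self_pow₀ hM (by omega)
      have : e ≤ (r ^ (1 / (n : ℝ))) ^ i := by
        rw [← Real.rpow_natCast, ← Real.rpow_mul hr.le]
        calc e = e ^ (1 : ℝ) := (Real.rpow_one e).symm
          _ ≤ e ^ (1 / (n : ℝ) * i) := by
            apply Real.rpow_le_rpow_of_exponent_ge he he1
            rw [one_div_mul_eq_div, div_le_one (by positivity)]
            exact_mod_cast h2
          _ ≤ _ := Real.rpow_le_rpow he.le her (by positivity)
      gcongr
    · subst h
      rw [hroot]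
      refine htop.trans ?_
      have hMi : M ≤ M ^ i := le_self_pow₀ hM (by omega)
      gcongr)
  rwa [mul_pow, hroot, ← mul_assoc] at key

/-- The derivatives of a quasilinear expression `Φ(u) D²u + g(u)`, up to the top order term. -/
lemma exists_abs_iteratedDeriv_quasilinear_sub_le {Φ g : ℝ → ℝ}
    (hΦ : ContDiffOn ℝ (⊤ : ℕ∞) Φ (Ioi 0)) (hg : ContDiffOn ℝ (⊤ : ℕ∞) g (Ioi 0))
    {c₀ : ℝ} (hc₀ : 0 < c₀) (c₁ : ℝ) {M : ℝ} (hM : 1 ≤ M) {L : ℕ} (hL : 1 ≤ L) :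
    ∃ C : ℝ, 0 ≤ C ∧ ∀ u : ℝ → ℝ, ContDiff ℝ (⊤ : ℕ∞) u → (∀ x, u x ∈ Icc c₀ c₁) →
      ∀ e : ℝ, 0 < e → e ≤ 1 → ∀ x : ℝ,
        (∀ i, 1 ≤ i → i ≤ L → |iteratedDeriv i u x| ≤ M * e) →
        |iteratedDeriv (L + 1) (fun y => Φ (u y) * deriv (deriv u) y + g (u y)) x
            - Φ (u x) * iteratedDeriv (L + 3) u x|
          ≤ C * (|iteratedDeriv (L + 2) u x| +
              (e + |iteratedDeriv (L + 1) u x|) * (1 + |iteratedDeriv (L + 1) u x|)) := by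
  have hex : ∀ n : ℕ, ∃ C : ℝ, 0 ≤ C ∧ (1 ≤ n → ∀ u : ℝ → ℝ, ContDiff ℝ (⊤ : ℕ∞) u →
      (∀ x, u x ∈ Icc c₀ c₁) →
      ∀ x e r : ℝ, 0 < e → e ≤ 1 → e ≤ r →
        (∀ i, 1 ≤ i → i < n → |iteratedDeriv i u x| ≤ M * e) → |iteratedDeriv n u x| ≤ M * r →
        |iteratedDeriv n (Φ ∘ u) x| ≤ C * r) := by
    intro n
    by_cases hn : 1 ≤ n
    · obtain ⟨C, hC, H⟩ := exists_abs_iteratedDeriv_comp_le hΦ hc₀ c₁ hM hn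
      exact ⟨C, hC, fun _ => H⟩
    · exact ⟨0, le_rfl, fun h => absurd h hn⟩
  choose A hA0 hA using hex
  obtain ⟨G, hG0, hG⟩ := exists_abs_iteratedDeriv_comp_le hg hc₀ c₁ hM (n := L + 1) (by omega)
  have hM0 : 0 ≤ M := by linarith
  refine ⟨∑ i ∈ Finset.range (L + 1), ((L + 1).choose (i + 1) : ℝ) * (A (i + 1) * M) + G,
    add_nonneg (Finset.sum_nonneg fun i _ =>
      mul_nonneg (Nat.cast_nonneg _) (mul_nonneg (hA0 _) hM0)) hG0, ?_⟩
  intro u hu hur e he he1 x hlow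
  set a := |iteratedDeriv (L + 1) u x| with ha
  set b := |iteratedDeriv (L + 2) u x| with hb
  have ha0 : 0 ≤ a := abs_nonneg _
  have hb0 : 0 ≤ b := abs_nonneg _
  have hu0 : ∀ y, u y ∈ Ioi (0 : ℝ) := fun y => lt_of_lt_of_le hc₀ (hur y).1
  have hΦu : ContDiff ℝ (⊤ : ℕ∞) (Φ ∘ u) :=
    contDiffOn_univ.1 (hΦ.comp hu.contDiffOn fun y _ => hu0 y)
  have hgu : ContDiff ℝ (⊤ : ℕ∞) (g ∘ u) :=
    contDiffOn_univ.1 (hg.comp hu.contDiffOn fun y _ => hu0 y)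
  have hd2 : deriv (deriv u) = iteratedDeriv 2 u := by
    rw [iteratedDeriv_succ, iteratedDeriv_one]
  have hu2 : ContDiff ℝ (⊤ : ℕ∞) (iteratedDeriv 2 u) := by
    rw [iteratedDeriv_eq_iterate]
    exact hu.iterate_deriv 2
  have hit : ∀ k, iteratedDeriv k (iteratedDeriv 2 u) = iteratedDeriv (k + 2) u := by
    intro k
    simp only [iteratedDeriv_eq_iterate, Function.iterate_add_apply]
  have hexp : iteratedDeriv (L + 1) (fun y => Φ (u y) * deriv (deriv u) y + g (u y)) x
      - Φ (u x) * iteratedDeriv (L + 3) u x =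
      ∑ i ∈ Finset.range (L + 1), ((L + 1).choose (i + 1) : ℝ) *
        iteratedDeriv (i + 1) (Φ ∘ u) x * iteratedDeriv (L - i + 2) u x
      + iteratedDeriv (L + 1) (g ∘ u) x := by
    have h1 : (fun y => Φ (u y) * deriv (deriv u) y + g (u y))
        = (Φ ∘ u) * iteratedDeriv 2 u + g ∘ u := by
      funext y; simp [hd2]
    have le : ((L + 1 : ℕ) : WithTop ℕ∞) ≤ ((⊤ : ℕ∞) : WithTop ℕ∞) := by exact_mod_cast le_top
    have hmul : ContDiff ℝ (⊤ : ℕ∞) ((Φ ∘ u) * iteratedDeriv 2 u) := hΦu.mul hu2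
    rw [h1, iteratedDeriv_add (hmul.of_le le).contDiffAt (hgu.of_le le).contDiffAt,
      iteratedDeriv_mul (hΦu.of_le le).contDiffAt (hu2.of_le le).contDiffAt,
      Finset.sum_range_succ']
    simp only [hit, iteratedDeriv_zero, Nat.choose_zero_right, Nat.sub_zero, Nat.add_sub_add_right]
    simp only [Function.comp_apply, Nat.cast_one, one_mul]
    ring
  rw [hexp]
  have hae : 0 ≤ (e + a) * (1 + a) := by positivity
  have hterm : ∀ i ∈ Finset.range (L + 1), |((L + 1).choose (i + 1) : ℝ) *
      iteratedDeriv (i + 1) (Φ ∘ u) x * iteratedDeriv (L - i + 2) u x| ≤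
      ((L + 1).choose (i + 1) : ℝ) * (A (i + 1) * M) * (b + (e + a) * (1 + a)) := by
    intro i hi
    have hi' : i ≤ L := by simpa [Nat.lt_succ_iff] using hi
    rw [abs_mul, abs_mul, Nat.abs_cast, mul_assoc, mul_assoc]
    refine mul_le_mul_of_nonneg_left ?_ (Nat.cast_nonneg _)
    have hAi := hA0 (i + 1)
    have hlowi : i < L → |iteratedDeriv (i + 1) (Φ ∘ u) x| ≤ A (i + 1) * e := fun h =>
      hA (i + 1) (by omega) u hu hur x e e he he1 le_rfl
        (fun j h1 h2 => hlow j h1 (by omega)) (hlow _ (by omega) (by omega))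
    rcases hi'.lt_or_eq with h | h
    · have h1 := hlowi h
      have h2 : |iteratedDeriv (L - i + 2) u x| ≤ M * (b + (e + a)) := by
        rcases Nat.eq_zero_or_pos i with h0 | h0
        · subst h0
          simp only [Nat.sub_zero, ← hb]
          nlinarith
        · rcases Nat.lt_or_ge (L - i + 2) (L + 1) with h3 | h3
          · refine (hlow _ (by omega) (by omega)).trans ?_
            gcongr; linarith
          · have : L - i + 2 = L + 1 := by omega
            rw [this, ← ha]
            nlinarith
      calc _ ≤ (A (i + 1) * e) * (M * (b + (e + a))) := by gcongr
        _ ≤ (A (i + 1) * 1) * (M * (b + (e + a) * (1 + a))) := by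
          gcongr
          nlinarith
        _ = _ := by ring
    · subst h
      have h1 : |iteratedDeriv (i + 1) (Φ ∘ u) x| ≤ A (i + 1) * (e + a) :=
        hA (i + 1) (by omega) u hu hur x e (e + a) he he1 (by linarith)
          (fun j h1 h2 => hlow j h1 (by omega)) (by rw [← ha]; nlinarith)
      have h2 : |iteratedDeriv (i - i + 2) u x| ≤ M * (1 + a) := by
        rw [Nat.sub_self, Nat.zero_add]
        rcases Nat.lt_or_ge i 2 with h3 | h3
        · have : 2 = i + 1 := by omega
          rw [this, ← ha]
          nlinarith
        · refine (hlow _ (by omega) (by omega)).trans ?_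
          gcongr; linarith
      calc _ ≤ (A (i + 1) * (e + a)) * (M * (1 + a)) := by gcongr
        _ = (A (i + 1) * M) * ((e + a) * (1 + a)) := by ring
        _ ≤ (A (i + 1) * M) * (b + (e + a) * (1 + a)) := by gcongr; linarith
        _ = _ := by ring
  have hGb : |iteratedDeriv (L + 1) (g ∘ u) x| ≤ G * (e + a) :=
    hG u hu hur x e (e + a) he he1 (by linarith)
      (fun j h1 h2 => hlow j h1 (by omega)) (by rw [← ha]; nlinarith)
  calc _ ≤ _ := abs_add_le _ _
    _ ≤ ∑ i ∈ Finset.range (L + 1), ((L + 1).choose (i + 1) : ℝ) * (A (i + 1) * M) *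
          (b + (e + a) * (1 + a)) + G * (b + (e + a) * (1 + a)) := by
        refine add_le_add ((Finset.abs_sum_le_sum_abs _ _).trans (Finset.sum_le_sum hterm))
          (hGb.trans (mul_le_mul_of_nonneg_left ?_ hG0))
        nlinarith
    _ = _ := by rw [← Finset.sum_mul]; ring

lemma contDiff_iteratedDeriv_top {u : ℝ → ℝ} (hu : ContDiff ℝ (⊤ : ℕ∞) u) (n : ℕ) :
    ContDiff ℝ (⊤ : ℕ∞) (iteratedDeriv n u) := by
  rw [iteratedDeriv_eq_iterate]
  exact hu.iterate_deriv n

lemma periodic_iteratedDeriv {u : ℝ → ℝ} {T : ℝ} (hu : Function.Periodic u T) (n : ℕ) :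
    Function.Periodic (iteratedDeriv n u) T := by
  intro x
  have h : (fun y => u (y + T)) = u := funext hu
  conv_rhs => rw [← h]
  rw [iteratedDeriv_comp_add_const]

/-- Integration by parts over a period. -/
lemma integral_mul_deriv_of_periodic {f g : ℝ → ℝ} {T : ℝ} (hf : ContDiff ℝ 1 f)
    (hg : ContDiff ℝ 1 g) (hfp : Function.Periodic f T) (hgp : Function.Periodic g T) :
    ∫ x in (0 : ℝ)..T, f x * deriv g x = -∫ x in (0 : ℝ)..T, deriv f x * g x := by
  rw [intervalIntegral.integral_mul_deriv_eq_deriv_mul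
    (fun x _ => (hf.differentiable one_ne_zero x).hasDerivAt)
    (fun x _ => (hg.differentiable one_ne_zero x).hasDerivAt)
    ((hf.continuous_deriv le_rfl).intervalIntegrable _ _)
    ((hg.continuous_deriv le_rfl).intervalIntegrable _ _)]
  have h1 := hfp 0
  have h2 := hgp 0
  rw [zero_add] at h1 h2
  rw [h1, h2]
  ring

/-- The Sobolev inequality in dimension one for derivatives of periodic functions. -/
lemma sq_deriv_le_integral_sq_of_periodic {w : ℝ → ℝ} {T : ℝ} (hT : 0 < T) (hw : ContDiff ℝ 2 w)
    (hp : Function.Periodic w T) (x : ℝ) :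
    deriv w x ^ 2 ≤ T * ∫ y in (0 : ℝ)..T, deriv (deriv w) y ^ 2 := by
  have hw1 : ContDiff ℝ 1 (deriv w) := by
    have : ContDiff ℝ (1 + 1) w := by simpa [one_add_one_eq_two] using hw
    exact (contDiff_succ_iff_deriv.1 this).2.2
  have hc : Continuous (deriv (deriv w)) := hw1.continuous_deriv le_rfl
  have hpd : Function.Periodic (fun y => deriv (deriv w) y ^ 2) T := by
    have h := periodic_iteratedDeriv hp 2
    rw [iteratedDeriv_succ, iteratedDeriv_one] at h
    intro y
    simp only [h y]
  obtain ⟨ξ, hξ, hξ0⟩ := exists_deriv_eq_zero (f := w) (lt_add_of_pos_right x hT)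
    hw.continuous.continuousOn (hp x).symm
  set J := ∫ y in x..x + T, |deriv (deriv w) y| with hJ
  have h1 : |deriv w x| ≤ J := by
    have h2 : ∫ y in x..ξ, deriv (deriv w) y = deriv w ξ - deriv w x :=
      intervalIntegral.integral_deriv_eq_sub
        (fun y _ => hw1.differentiable one_ne_zero y) (hc.intervalIntegrable _ _)
    have h3 : |deriv w x| = |∫ y in x..ξ, deriv (deriv w) y| := by
      rw [h2, hξ0, zero_sub, abs_neg]
    rw [h3]
    refine (intervalIntegral.abs_integral_le_integral_abs hξ.1.le).trans ?_
    exact intervalIntegral.integral_mono_interval le_rfl hξ.1.le hξ.2.le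
      (Eventually.of_forall fun y => abs_nonneg _) (hc.abs.intervalIntegrable _ _)
  have hJ2 : J ^ 2 ≤ T * ∫ y in x..x + T, deriv (deriv w) y ^ 2 := by
    have h0 : 0 ≤ ∫ y in x..x + T, (|deriv (deriv w) y| - J / T) ^ 2 :=
      intervalIntegral.integral_nonneg (by linarith) fun y _ => sq_nonneg _
    have h2 : ∫ y in x..x + T, (|deriv (deriv w) y| - J / T) ^ 2 =
        (∫ y in x..x + T, deriv (deriv w) y ^ 2) - J ^ 2 / T := by
      have h3 : ∀ y, (|deriv (deriv w) y| - J / T) ^ 2 =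
          deriv (deriv w) y ^ 2 - 2 * (J / T) * |deriv (deriv w) y| + (J / T) ^ 2 := by
        intro y
        rw [← sq_abs (deriv (deriv w) y)]
        ring
      simp only [h3]
      rw [intervalIntegral.integral_add, intervalIntegral.integral_sub,
        intervalIntegral.integral_const_mul, ← hJ, intervalIntegral.integral_const]
      · simp only [smul_eq_mul]
        field_simp
        ring
      all_goals exact Continuous.intervalIntegrable (by fun_prop) _ _
    rw [h2] at h0
    have h4 : J ^ 2 / T ≤ ∫ y in x..x + T, deriv (deriv w) y ^ 2 := by linarith
    rw [div_le_iff₀ hT] at h4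
    linarith
  have h5 := hpd.intervalIntegral_add_eq x 0
  rw [zero_add] at h5
  rw [← h5]
  calc deriv w x ^ 2 = |deriv w x| ^ 2 := (sq_abs _).symm
    _ ≤ J ^ 2 := by gcongr
    _ ≤ _ := hJ2

set_option maxHeartbeats 1000000 in
/-- The energy inequality at a fixed time for a quasilinear second order expression. -/
lemma exists_two_mul_integral_quasilinear_le {Φ g : ℝ → ℝ}
    (hΦ : ContDiffOn ℝ (⊤ : ℕ∞) Φ (Ioi 0)) (hg : ContDiffOn ℝ (⊤ : ℕ∞) g (Ioi 0))
    {c₀ : ℝ} (hc₀ : 0 < c₀) (c₁ : ℝ) {φ : ℝ} (hφ : 0 < φ) (hφΦ : ∀ y ∈ Icc c₀ c₁, φ ≤ Φ y)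
    {M : ℝ} (hM : 1 ≤ M) {L : ℕ} (hL : 1 ≤ L) {lam : ℝ} (hlam : 0 < lam) :
    ∃ C : ℝ, 0 ≤ C ∧ ∀ u : ℝ → ℝ, ContDiff ℝ (⊤ : ℕ∞) u → Function.Periodic u (2 * π) →
      (∀ x, u x ∈ Icc c₀ c₁) → ∀ e : ℝ, 0 < e → e ≤ 1 →
        (∀ i, 1 ≤ i → i ≤ L → ∀ x, |iteratedDeriv i u x| ≤ M * e) →
        ∫ x in (0 : ℝ)..(2 * π), iteratedDeriv (L + 1) u x ^ 2 ≤ (M * e) ^ 2 →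
        ∫ x in (0 : ℝ)..(2 * π), 2 * (iteratedDeriv (L + 2) u x *
            iteratedDeriv (L + 2) (fun y => Φ (u y) * deriv (deriv u) y + g (u y)) x)
          ≤ -lam * (∫ x in (0 : ℝ)..(2 * π), iteratedDeriv (L + 2) u x ^ 2) + C * e ^ 2 := by
  obtain ⟨C, hC, H⟩ := exists_abs_iteratedDeriv_quasilinear_sub_le hΦ hg hc₀ c₁ hM hL
  have hM0 : 0 < M := by linarith
  have hpi : 0 < 2 * π := by positivity
  set K₁ : ℝ := 4 * C ^ 2 * (1 + 2 * π * M ^ 2) / φ with hK₁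
  have hK₁0 : 0 ≤ K₁ := by positivity
  set K₂ : ℝ := 4 * C ^ 2 * (2 * π + 4 * M ^ 2) / φ with hK₂
  have hK₂0 : 0 ≤ K₂ := by positivity
  set δ : ℝ := φ / (lam + K₁) with hδ
  have hδ0 : 0 < δ := by positivity
  refine ⟨K₂ + φ * M ^ 2 / (4 * δ ^ 2), by positivity, ?_⟩
  intro u hu hup hur e he he1 hlow hA
  set F : ℝ → ℝ := fun y => Φ (u y) * deriv (deriv u) y + g (u y) with hF
  have hu0 : ∀ y, u y ∈ Ioi (0 : ℝ) := fun y => lt_of_lt_of_le hc₀ (hur y).1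
  have hΦu : ContDiff ℝ (⊤ : ℕ∞) (fun y => Φ (u y)) :=
    contDiffOn_univ.1 (hΦ.comp hu.contDiffOn fun y _ => hu0 y)
  have hgu : ContDiff ℝ (⊤ : ℕ∞) (fun y => g (u y)) :=
    contDiffOn_univ.1 (hg.comp hu.contDiffOn fun y _ => hu0 y)
  have hd2 : deriv (deriv u) = iteratedDeriv 2 u := by
    rw [iteratedDeriv_succ, iteratedDeriv_one]
  have hFs : ContDiff ℝ (⊤ : ℕ∞) F := by
    rw [hF, hd2]
    exact (hΦu.mul (contDiff_iteratedDeriv_top hu 2)).add hgu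
  have hFp : Function.Periodic F (2 * π) := by
    intro x
    have h2 := periodic_iteratedDeriv hup 2 x
    simp only [hF, hd2, hup x, h2]
  set a := iteratedDeriv (L + 1) u with ha
  set b := iteratedDeriv (L + 2) u with hb
  set d := iteratedDeriv (L + 3) u with hd
  set f := iteratedDeriv (L + 1) F with hf
  have hab : deriv a = b := iteratedDeriv_succ.symm
  have hbd : deriv b = d := iteratedDeriv_succ.symm
  have hff : iteratedDeriv (L + 2) F = deriv f := iteratedDeriv_succ
  have has := contDiff_iteratedDeriv_top hu (L + 1)
  have hbs := contDiff_iteratedDeriv_top hu (L + 2)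
  have hds := contDiff_iteratedDeriv_top hu (L + 3)
  have hfs := contDiff_iteratedDeriv_top hFs (L + 1)
  rw [← ha] at has
  rw [← hb] at hbs
  rw [← hd] at hds
  rw [← hf] at hfs
  have le1 : (1 : WithTop ℕ∞) ≤ ((⊤ : ℕ∞) : WithTop ℕ∞) := by exact_mod_cast le_top
  have hac := has.continuous
  have hbc := hbs.continuous
  have hdc := hds.continuous
  have hfc := hfs.continuous
  have hΦc := hΦu.continuous
  have hibp1 : ∫ x in (0 : ℝ)..(2 * π), b x * deriv f x =
      -∫ x in (0 : ℝ)..(2 * π), d x * f x := by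
    rw [← hbd]
    exact integral_mul_deriv_of_periodic (hbs.of_le le1) (hfs.of_le le1)
      (periodic_iteratedDeriv hup _) (periodic_iteratedDeriv hFp _)
  have hibp2 : ∫ x in (0 : ℝ)..(2 * π), b x ^ 2 = -∫ x in (0 : ℝ)..(2 * π), d x * a x := by
    have := integral_mul_deriv_of_periodic (hbs.of_le le1) (has.of_le le1)
      (periodic_iteratedDeriv hup _) (periodic_iteratedDeriv hup _)
    rw [hab, hbd] at this
    simpa only [sq] using this
  set A2 := ∫ x in (0 : ℝ)..(2 * π), a x ^ 2 with hA2
  set B2 := ∫ x in (0 : ℝ)..(2 * π), b x ^ 2 with hB2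
  set D2 := ∫ x in (0 : ℝ)..(2 * π), d x ^ 2 with hD2
  have hB0 : 0 ≤ B2 := intervalIntegral.integral_nonneg hpi.le fun _ _ => sq_nonneg _
  have hSob : ∀ x, a x ^ 2 ≤ 2 * π * B2 := by
    intro x
    have h := sq_deriv_le_integral_sq_of_periodic (w := iteratedDeriv L u) hpi
      ((contDiff_iteratedDeriv_top hu L).of_le (WithTop.coe_le_coe.2 le_top))
      (periodic_iteratedDeriv hup L) x
    rw [show deriv (iteratedDeriv L u) = a from iteratedDeriv_succ.symm, hab] at h
    exact h
  have hinterp : B2 ≤ δ * D2 + A2 / (4 * δ) := by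
    rw [hibp2, ← intervalIntegral.integral_neg, hD2, hA2, ← intervalIntegral.integral_const_mul,
      ← intervalIntegral.integral_div, ← intervalIntegral.integral_add]
    · refine intervalIntegral.integral_mono_on hpi.le
        (Continuous.intervalIntegrable (by fun_prop) _ _)
        (Continuous.intervalIntegrable (by fun_prop) _ _) fun x _ => ?_
      have h : δ * d x ^ 2 + a x ^ 2 / (4 * δ) - -(d x * a x)
          = (2 * δ * d x + a x) ^ 2 / (4 * δ) := by
        field_simp
        ring
      have h2 : 0 ≤ (2 * δ * d x + a x) ^ 2 / (4 * δ) := by positivity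
      linarith
    all_goals exact Continuous.intervalIntegrable (by fun_prop) _ _
  have hpt : ∀ x, -(2 * (d x * f x)) ≤
      -φ * d x ^ 2 + 4 * C ^ 2 / φ * (b x ^ 2 + e ^ 2 + (4 + 2 * π * B2) * a x ^ 2) := by
    intro x
    set R := f x - Φ (u x) * d x with hR
    have hRb : |R| ≤ C * (|b x| + (e + |a x|) * (1 + |a x|)) :=
      H u hu hur e he he1 x fun i h1 h2 => hlow i h1 h2 x
    have h1 : R ^ 2 ≤ 4 * C ^ 2 * (b x ^ 2 + e ^ 2 + (4 + 2 * π * B2) * a x ^ 2) := by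
      have ha0 := abs_nonneg (a x)
      have hb0 := abs_nonneg (b x)
      have h2 : |b x| + (e + |a x|) * (1 + |a x|) ≤ |b x| + e + 2 * |a x| + |a x| ^ 2 := by
        nlinarith
      have h3 : (|b x| + e + 2 * |a x| + |a x| ^ 2) ^ 2 ≤
          4 * (|b x| ^ 2 + e ^ 2 + 4 * |a x| ^ 2 + (|a x| ^ 2) ^ 2) := by
        generalize hz : |a x| ^ 2 = z
        rw [show 4 * z = (2 * |a x|) ^ 2 by rw [mul_pow, hz]; norm_num]
        generalize |a x| = y
        generalize |b x| = w
        linarith [sq_nonneg (w - e), sq_nonneg (w - 2 * y), sq_nonneg (w - z),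
          sq_nonneg (e - 2 * y), sq_nonneg (e - z), sq_nonneg (2 * y - z)]
      have h4 : (|a x| ^ 2) ^ 2 ≤ 2 * π * B2 * a x ^ 2 := by
        rw [sq_abs, sq (a x ^ 2)]
        exact mul_le_mul_of_nonneg_right (hSob x) (sq_nonneg _)
      calc R ^ 2 = |R| ^ 2 := (sq_abs R).symm
        _ ≤ (C * (|b x| + e + 2 * |a x| + |a x| ^ 2)) ^ 2 := by
          refine pow_le_pow_left₀ (abs_nonneg _) (hRb.trans ?_) 2
          exact mul_le_mul_of_nonneg_left h2 hC
        _ = C ^ 2 * (|b x| + e + 2 * |a x| + |a x| ^ 2) ^ 2 := by ring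
        _ ≤ C ^ 2 * (4 * (|b x| ^ 2 + e ^ 2 + 4 * |a x| ^ 2 + 2 * π * B2 * a x ^ 2)) := by
          refine mul_le_mul_of_nonneg_left (h3.trans ?_) (sq_nonneg C)
          linarith
        _ = _ := by rw [sq_abs, sq_abs]; ring
    have h5 : φ * d x ^ 2 ≤ Φ (u x) * d x ^ 2 :=
      mul_le_mul_of_nonneg_right (hφΦ _ (hur x)) (sq_nonneg _)
    have h6 : -(2 * (d x * R)) ≤ φ * d x ^ 2 + R ^ 2 / φ := by
      have h : φ * d x ^ 2 + R ^ 2 / φ - -(2 * (d x * R)) = (φ * d x + R) ^ 2 / φ := by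
        field_simp
        ring
      have h2 : 0 ≤ (φ * d x + R) ^ 2 / φ := by positivity
      linarith
    have h7 : R ^ 2 / φ ≤ 4 * C ^ 2 / φ * (b x ^ 2 + e ^ 2 + (4 + 2 * π * B2) * a x ^ 2) := by
      rw [div_mul_eq_mul_div]
      gcongr
    have h8 : -(2 * (d x * f x)) = -(2 * (Φ (u x) * d x ^ 2)) + -(2 * (d x * R)) := by
      rw [hR]; ring
    rw [h8]
    linarith
  have hint : -(2 * ∫ x in (0 : ℝ)..(2 * π), d x * f x) ≤
      -φ * D2 + 4 * C ^ 2 / φ * (B2 + 2 * π * e ^ 2 + (4 + 2 * π * B2) * A2) := by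
    have h1 : B2 + 2 * π * e ^ 2 + (4 + 2 * π * B2) * A2 =
        ∫ x in (0 : ℝ)..(2 * π), (b x ^ 2 + e ^ 2 + (4 + 2 * π * B2) * a x ^ 2) := by
      rw [intervalIntegral.integral_add, intervalIntegral.integral_add,
        intervalIntegral.integral_const_mul, intervalIntegral.integral_const, ← hB2, ← hA2]
      · simp
      all_goals exact Continuous.intervalIntegrable (by fun_prop) _ _
    rw [h1, hD2, ← intervalIntegral.integral_const_mul, ← intervalIntegral.integral_neg,
      ← intervalIntegral.integral_const_mul, ← intervalIntegral.integral_const_mul,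
      ← intervalIntegral.integral_add]
    · exact intervalIntegral.integral_mono_on hpi.le
        (Continuous.intervalIntegrable (by fun_prop) _ _)
        (Continuous.intervalIntegrable (by fun_prop) _ _) fun x _ => hpt x
    all_goals exact Continuous.intervalIntegrable (by fun_prop) _ _
  rw [hff, intervalIntegral.integral_const_mul, hibp1, mul_neg]
  refine hint.trans ?_
  have hA' : A2 ≤ M ^ 2 * e ^ 2 := by rw [← mul_pow]; exact hA
  have he2 : e ^ 2 ≤ 1 := by nlinarith
  have hA1 : A2 ≤ M ^ 2 := hA'.trans (by nlinarith [sq_nonneg M])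
  have h1 : 4 * C ^ 2 / φ * (B2 + 2 * π * e ^ 2 + (4 + 2 * π * B2) * A2) ≤
      K₁ * B2 + K₂ * e ^ 2 := by
    have h2 : K₁ * B2 + K₂ * e ^ 2 = 4 * C ^ 2 / φ *
        (B2 + 2 * π * e ^ 2 + 4 * (M ^ 2 * e ^ 2) + 2 * π * B2 * M ^ 2) := by
      rw [hK₁, hK₂]; ring
    rw [h2]
    refine mul_le_mul_of_nonneg_left ?_ (by positivity)
    have h3 : 2 * π * B2 * A2 ≤ 2 * π * B2 * M ^ 2 :=
      mul_le_mul_of_nonneg_left hA1 (by positivity)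
    linarith
  have h2 : (lam + K₁) * B2 ≤ φ * D2 + φ * M ^ 2 / (4 * δ ^ 2) * e ^ 2 := by
    have h3 : lam + K₁ = φ / δ := by rw [hδ]; field_simp
    rw [h3]
    calc φ / δ * B2 ≤ φ / δ * (δ * D2 + M ^ 2 * e ^ 2 / (4 * δ)) := by
          refine mul_le_mul_of_nonneg_left (hinterp.trans ?_) (by positivity)
          have := div_le_div_of_nonneg_right hA' (show 0 ≤ 4 * δ by positivity)
          linarith
      _ = _ := by field_simp
  linarith

lemma hasDerivAt_fst_slice {f : ℝ → ℝ → ℝ}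
    (hf : ContDiffOn ℝ (⊤ : ℕ∞) (fun q : ℝ × ℝ => f q.1 q.2) (univ ×ˢ Ici 0)) {q : ℝ × ℝ}
    (hq : q ∈ (univ : Set ℝ) ×ˢ Ici (0 : ℝ)) :
    HasDerivAt (fun x => f x q.2)
      (fderivWithin ℝ (fun q : ℝ × ℝ => f q.1 q.2) (univ ×ˢ Ici 0) q (1, 0)) q.1 := by
  have h1 := (hf.differentiableOn (by simp) q hq).hasFDerivWithinAt
  have h2 : HasDerivWithinAt (fun x : ℝ => (x, q.2)) (1, 0) univ q.1 :=
    ((hasDerivAt_id q.1).prodMk (hasDerivAt_const q.1 q.2)).hasDerivWithinAt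
  have h3 : MapsTo (fun x : ℝ => (x, q.2)) univ ((univ : Set ℝ) ×ˢ Ici (0 : ℝ)) :=
    fun x _ => ⟨mem_univ _, hq.2⟩
  have h4 := h1.comp_hasDerivWithinAt q.1 h2 h3
  rw [hasDerivWithinAt_univ] at h4
  exact h4

lemma contDiffOn_iteratedDeriv_fst {f : ℝ → ℝ → ℝ}
    (hf : ContDiffOn ℝ (⊤ : ℕ∞) (fun q : ℝ × ℝ => f q.1 q.2) (univ ×ˢ Ici 0)) (m : ℕ) :
    ContDiffOn ℝ (⊤ : ℕ∞) (fun q : ℝ × ℝ => iteratedDeriv m (fun x => f x q.2) q.1)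
      (univ ×ˢ Ici 0) := by
  induction m with
  | zero => simpa using hf
  | succ m ih =>
    have ih' : ContDiffOn ℝ (⊤ : ℕ∞)
        (fun q : ℝ × ℝ => (fun y s => iteratedDeriv m (fun x => f x s) y) q.1 q.2)
        (univ ×ˢ Ici 0) := ih
    have h1 := (ih'.fderivWithin (uniqueDiffOn_univ.prod (uniqueDiffOn_Ici 0))
      (m := (⊤ : ℕ∞)) (by simp)).clm_apply (contDiffOn_const (c := ((1 : ℝ), (0 : ℝ))))
    refine h1.congr fun q hq => ?_
    rw [iteratedDeriv_succ]
    exact (hasDerivAt_fst_slice (f := fun y s => iteratedDeriv m (fun x => f x s) y) ih' hq).deriv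

lemma contDiffAt_of_contDiffOn_Ici {f : ℝ → ℝ → ℝ}
    (hf : ContDiffOn ℝ (⊤ : ℕ∞) (fun q : ℝ × ℝ => f q.1 q.2) (univ ×ˢ Ici 0)) {q : ℝ × ℝ}
    (hq : 0 < q.2) : ContDiffAt ℝ (⊤ : ℕ∞) (fun q : ℝ × ℝ => f q.1 q.2) q :=
  hf.contDiffAt (prod_mem_nhds univ_mem (Ici_mem_nhds hq))

lemma hasDerivAt_fst_of_contDiffOn {f : ℝ → ℝ → ℝ}
    (hf : ContDiffOn ℝ (⊤ : ℕ∞) (fun q : ℝ × ℝ => f q.1 q.2) (univ ×ˢ Ici 0)) {q : ℝ × ℝ}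
    (hq : 0 < q.2) :
    HasDerivAt (fun x => f x q.2) (fderiv ℝ (fun q : ℝ × ℝ => f q.1 q.2) q (1, 0)) q.1 := by
  have h1 := ((contDiffAt_of_contDiffOn_Ici hf hq).differentiableAt (by simp)).hasFDerivAt
  exact h1.comp_hasDerivAt q.1 ((hasDerivAt_id q.1).prodMk (hasDerivAt_const q.1 q.2))

lemma hasDerivAt_snd_of_contDiffOn {f : ℝ → ℝ → ℝ}
    (hf : ContDiffOn ℝ (⊤ : ℕ∞) (fun q : ℝ × ℝ => f q.1 q.2) (univ ×ˢ Ici 0)) {q : ℝ × ℝ}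
    (hq : 0 < q.2) :
    HasDerivAt (fun s => f q.1 s) (fderiv ℝ (fun q : ℝ × ℝ => f q.1 q.2) q (0, 1)) q.2 := by
  have h1 := ((contDiffAt_of_contDiffOn_Ici hf hq).differentiableAt (by simp)).hasFDerivAt
  exact h1.comp_hasDerivAt q.2 ((hasDerivAt_const q.2 q.1).prodMk (hasDerivAt_id q.2))

/-- Mixed partial derivatives commute. -/
lemma deriv_deriv_swap_of_contDiffOn {f : ℝ → ℝ → ℝ}
    (hf : ContDiffOn ℝ (⊤ : ℕ∞) (fun q : ℝ × ℝ => f q.1 q.2) (univ ×ˢ Ici 0)) (θ : ℝ) {τ : ℝ}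
    (hτ : 0 < τ) :
    deriv (fun s => deriv (fun x => f x s) θ) τ = deriv (fun x => deriv (fun s => f x s) τ) θ := by
  set F : ℝ × ℝ → ℝ := fun q => f q.1 q.2 with hF
  have hFat : ContDiffAt ℝ (⊤ : ℕ∞) F (θ, τ) := contDiffAt_of_contDiffOn_Ici hf hτ
  have hsymm : IsSymmSndFDerivAt ℝ F (θ, τ) := hFat.isSymmSndFDerivAt (by
    rw [minSmoothness_of_isRCLikeNormedField]
    exact WithTop.coe_le_coe.2 le_top)
  have hd : HasFDerivAt (fderiv ℝ F) (fderiv ℝ (fderiv ℝ F) (θ, τ)) (θ, τ) :=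
    ((hFat.fderiv_right (m := 1) (WithTop.coe_le_coe.2 le_top)).differentiableAt
      one_ne_zero).hasFDerivAt
  have h1 : HasDerivAt (fun s => fderiv ℝ F (θ, s) (1, 0))
      (fderiv ℝ (fderiv ℝ F) (θ, τ) (0, 1) (1, 0)) τ := by
    have h := hd.comp_hasDerivAt τ ((hasDerivAt_const τ θ).prodMk (hasDerivAt_id τ))
    simpa using h.clm_apply (hasDerivAt_const τ ((1 : ℝ), (0 : ℝ)))
  have h2 : HasDerivAt (fun x => fderiv ℝ F (x, τ) (0, 1))
      (fderiv ℝ (fderiv ℝ F) (θ, τ) (1, 0) (0, 1)) θ := by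
    have h := hd.comp_hasDerivAt θ ((hasDerivAt_id θ).prodMk (hasDerivAt_const θ τ))
    simpa using h.clm_apply (hasDerivAt_const θ ((0 : ℝ), (1 : ℝ)))
  have e1 : (fun s => deriv (fun x => f x s) θ) =ᶠ[nhds τ] fun s => fderiv ℝ F (θ, s) (1, 0) := by
    filter_upwards [Ioi_mem_nhds hτ] with s hs
    exact (hasDerivAt_fst_of_contDiffOn hf (q := (θ, s)) hs).deriv
  have e2 : (fun x => deriv (fun s => f x s) τ) = fun x => fderiv ℝ F (x, τ) (0, 1) := by
    funext x
    exact (hasDerivAt_snd_of_contDiffOn hf (q := (x, τ)) hτ).deriv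
  rw [e1.deriv_eq, e2, h1.deriv, h2.deriv]
  exact hsymm _ _

lemma deriv_iteratedDeriv_swap_of_contDiffOn {f : ℝ → ℝ → ℝ}
    (hf : ContDiffOn ℝ (⊤ : ℕ∞) (fun q : ℝ × ℝ => f q.1 q.2) (univ ×ˢ Ici 0)) (m : ℕ) (θ : ℝ)
    {τ : ℝ} (hτ : 0 < τ) :
    deriv (fun s => iteratedDeriv m (fun x => f x s) θ) τ =
      iteratedDeriv m (fun x => deriv (fun s => f x s) τ) θ := by
  induction m generalizing θ with
  | zero => simp
  | succ m ih =>
    simp only [iteratedDeriv_succ]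
    rw [deriv_deriv_swap_of_contDiffOn
      (f := fun y s => iteratedDeriv m (fun x => f x s) y) (contDiffOn_iteratedDeriv_fst hf m) θ hτ]
    congr 1
    funext y
    exact ih y

/-- Differentiation of `∫ f²` with respect to the parameter. -/
lemma hasDerivAt_integral_sq_of_contDiffOn {f : ℝ → ℝ → ℝ}
    (hf : ContDiffOn ℝ (⊤ : ℕ∞) (fun q : ℝ × ℝ => f q.1 q.2) (univ ×ˢ Ici 0)) (T : ℝ)
    {τ : ℝ} (hτ : 0 < τ) :
    HasDerivAt (fun s => ∫ x in (0 : ℝ)..T, f x s ^ 2)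
      (∫ x in (0 : ℝ)..T, 2 * (f x τ * deriv (fun s => f x s) τ)) τ := by
  set F : ℝ × ℝ → ℝ := fun q => f q.1 q.2 with hF
  have hsub : (univ : Set ℝ) ×ˢ Ioi (0 : ℝ) ⊆ univ ×ˢ Ici 0 :=
    prod_mono le_rfl Ioi_subset_Ici_self
  have hFc : ContinuousOn F (univ ×ˢ Ioi 0) := hf.continuousOn.mono hsub
  have hDc : ContinuousOn (fun q : ℝ × ℝ => fderiv ℝ F q (0, 1)) (univ ×ˢ Ioi 0) :=
    ((hf.mono hsub).continuousOn_fderiv_of_isOpen (isOpen_univ.prod isOpen_Ioi)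
      (by simp)).clm_apply continuousOn_const
  have hGc : ContinuousOn (fun q : ℝ × ℝ => 2 * (F q * fderiv ℝ F q (0, 1))) (univ ×ˢ Ioi 0) :=
    continuousOn_const.mul (hFc.mul hDc)
  have hslice : ∀ {G : ℝ × ℝ → ℝ}, ContinuousOn G (univ ×ˢ Ioi 0) → ∀ s : ℝ, 0 < s →
      Continuous fun x => G (x, s) := fun hG s hs =>
    hG.comp_continuous (by fun_prop) fun x => ⟨mem_univ _, hs⟩
  obtain ⟨B, hB⟩ := ((isCompact_uIcc (a := (0 : ℝ)) (b := T)).prod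
    (isCompact_Icc (a := τ / 2) (b := 2 * τ))).exists_bound_of_continuousOn
    (hGc.mono (prod_mono (subset_univ _) fun s hs => lt_of_lt_of_le (half_pos hτ) hs.1))
  have hderiv : ∀ x s, 0 < s → deriv (fun s => f x s) s = fderiv ℝ F (x, s) (0, 1) :=
    fun x s hs => (hasDerivAt_snd_of_contDiffOn hf (q := (x, s)) hs).deriv
  have key := intervalIntegral.hasDerivAt_integral_of_dominated_loc_of_deriv_le
    (μ := MeasureTheory.volume) (a := 0) (b := T) (F := fun s x => f x s ^ 2)
    (F' := fun s x => 2 * (F (x, s) * fderiv ℝ F (x, s) (0, 1))) (x₀ := τ)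
    (s := Icc (τ / 2) (2 * τ)) (bound := fun _ => B)
    (Icc_mem_nhds (by linarith) (by linarith))
    (by
      filter_upwards [Ioi_mem_nhds hτ] with s hs
      exact ((hslice hFc s hs).pow 2).aestronglyMeasurable)
    (((hslice hFc τ hτ).pow 2).intervalIntegrable _ _)
    (hslice hGc τ hτ).aestronglyMeasurable
    (Eventually.of_forall fun x hx s hs => hB (x, s) ⟨uIoc_subset_uIcc hx, hs⟩)
    intervalIntegrable_const
    (Eventually.of_forall fun x _ s hs => by
      have h := (hasDerivAt_snd_of_contDiffOn hf (q := (x, s))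
        (lt_of_lt_of_le (half_pos hτ) hs.1)).pow 2
      simp only [Nat.cast_ofNat, Nat.add_one_sub_one, pow_one, mul_assoc] at h
      exact h)
  have h2 := key.2
  simpa only [hderiv _ _ hτ] using h2

lemma continuousOn_integral_sq_of_contDiffOn {f : ℝ → ℝ → ℝ}
    (hf : ContDiffOn ℝ (⊤ : ℕ∞) (fun q : ℝ × ℝ => f q.1 q.2) (univ ×ˢ Ici 0)) (T : ℝ) :
    ContinuousOn (fun s => ∫ x in (0 : ℝ)..T, f x s ^ 2) (Ici 0) := by
  have h1 : Continuous fun q : ℝ × ℝ => f q.2 (max q.1 0) ^ 2 :=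
    (hf.continuousOn.comp_continuous (f := fun q : ℝ × ℝ => (q.2, max q.1 0)) (by fun_prop)
      fun q => ⟨mem_univ _, mem_Ici.2 (le_max_right _ _)⟩).pow 2
  have h2 : Continuous fun s : ℝ => ∫ x in (0 : ℝ)..T, f x (max s 0) ^ 2 :=
    intervalIntegral.continuous_parametric_intervalIntegral_of_continuous' h1 0 T
  refine h2.continuousOn.congr fun s hs => ?_
  simp only [max_eq_left (mem_Ici.1 hs)]

/-- A Grönwall-type estimate with exponentially decaying forcing. -/
lemma le_mul_exp_neg_of_hasDerivAt_le {E E' : ℝ → ℝ} {m C : ℝ} (hE : ContinuousOn E (Ici 0))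
    (hE' : ∀ t, 0 < t → HasDerivAt E (E' t) t)
    (hle : ∀ t, 0 < t → E' t ≤ -(m + 1) * E t + C * exp (-m * t)) {t : ℝ} (ht : 0 ≤ t) :
    E t ≤ (|C| + |E 0|) * exp (-m * t) := by
  set H : ℝ → ℝ := fun t => E t * exp ((m + 1) * t) - C * exp t with hH
  have hHd : ∀ t, 0 < t → HasDerivAt H
      (E' t * exp ((m + 1) * t) + E t * (exp ((m + 1) * t) * (m + 1)) - C * exp t) t := by
    intro t ht
    have h1 : HasDerivAt (fun t : ℝ => exp ((m + 1) * t)) (exp ((m + 1) * t) * (m + 1)) t := by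
      simpa using ((hasDerivAt_id t).const_mul (m + 1)).exp
    exact ((hE' t ht).mul h1).sub ((Real.hasDerivAt_exp t).const_mul C)
  have hexp : ∀ t : ℝ, exp (-m * t) * exp ((m + 1) * t) = exp t := by
    intro t
    rw [← Real.exp_add]
    ring_nf
  have hanti : AntitoneOn H (Ici 0) := by
    apply antitoneOn_of_deriv_nonpos (convex_Ici 0)
    · exact (hE.mul (by fun_prop)).sub (by fun_prop)
    · rw [interior_Ici]
      exact fun t ht => (hHd t ht).differentiableAt.differentiableWithinAt
    · rw [interior_Ici]
      intro t ht
      rw [(hHd t ht).deriv]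
      have h := mul_le_mul_of_nonneg_right (hle t ht) (exp_pos ((m + 1) * t)).le
      have h2 := hexp t
      generalize exp ((m + 1) * t) = y at h h2 ⊢
      rw [← h2]
      linarith
  have h0 := hanti (mem_Ici.2 le_rfl) (mem_Ici.2 ht) ht
  simp only [hH, mul_zero, Real.exp_zero, mul_one] at h0
  have h1 : 1 ≤ exp t := Real.one_le_exp ht
  have h2 : E t * exp ((m + 1) * t) ≤
      (|C| + |E 0|) * exp (-m * t) * exp ((m + 1) * t) := by
    rw [mul_assoc, hexp]
    have h3 := mul_le_mul_of_nonneg_right (le_abs_self C) (sub_nonneg.2 h1)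
    have h4 := mul_le_mul_of_nonneg_left h1 (abs_nonneg (E 0))
    linarith [le_abs_self (E 0), abs_nonneg C]
  exact le_of_mul_le_mul_right h2 (exp_pos _)

/-- A positive continuous function which is periodic in the first variable and converges uniformly
to `1` is bounded above and bounded away from zero. -/
lemma exists_mem_Icc_of_tendstoUniformly_one {K : ℝ → ℝ → ℝ} {T : ℝ} (hT : 0 < T)
    (hK : ContinuousOn (fun q : ℝ × ℝ => K q.1 q.2) (univ ×ˢ Ici 0))
    (hper : ∀ τ : ℝ, Function.Periodic (fun θ => K θ τ) T)
    (hpos : ∀ θ τ : ℝ, 0 ≤ τ → 0 < K θ τ)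
    (hconv : TendstoUniformly (fun τ θ => K θ τ) (fun _ => 1) atTop) :
    ∃ c₀ c₁ : ℝ, 0 < c₀ ∧ ∀ θ τ, 0 ≤ τ → K θ τ ∈ Icc c₀ c₁ := by
  have h1 := Metric.tendstoUniformly_iff.1 hconv (1 / 2) (by norm_num)
  obtain ⟨N, hN⟩ := eventually_atTop.1 h1
  have hcomp : IsCompact (Icc (0 : ℝ) T ×ˢ Icc (0 : ℝ) |N|) := isCompact_Icc.prod isCompact_Icc
  have hne : (Icc (0 : ℝ) T ×ˢ Icc (0 : ℝ) |N|).Nonempty :=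
    ⟨(0, 0), ⟨le_rfl, hT.le⟩, le_rfl, abs_nonneg _⟩
  have hc := hK.mono (s := univ ×ˢ Ici 0) (t := Icc (0 : ℝ) T ×ˢ Icc (0 : ℝ) |N|)
    (prod_mono (subset_univ _) Icc_subset_Ici_self)
  obtain ⟨q, hq, hqmin⟩ := hcomp.exists_isMinOn hne hc
  obtain ⟨r, hr, hrmax⟩ := hcomp.exists_isMaxOn hne hc
  refine ⟨min (K q.1 q.2) (1 / 2), max (K r.1 r.2) (3 / 2),
    lt_min (hpos _ _ hq.2.1) (by norm_num), fun θ τ hτ => ?_⟩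
  rcases le_total τ |N| with h | h
  · obtain ⟨y, hy, hyK⟩ := (hper τ).exists_mem_Ico₀ hT θ
    have hmem : (y, τ) ∈ Icc (0 : ℝ) T ×ˢ Icc (0 : ℝ) |N| := ⟨Ico_subset_Icc_self hy, hτ, h⟩
    rw [show K θ τ = K y τ from hyK]
    exact ⟨(min_le_left _ _).trans (hqmin hmem), (hrmax hmem).trans (le_max_left _ _)⟩
  · have h2 := hN τ ((le_abs_self N).trans h) θ
    rw [Real.dist_eq, abs_lt] at h2
    exact ⟨(min_le_right _ _).trans (by linarith), le_trans (by linarith) (le_max_right _ _)⟩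

/-- The inductive step in the proof of Proposition 2.1: decay of the sup
norms of the first `L` derivatives and of the `L²` norm of the `(L+1)`-st
derivative implies decay of the `L²` norm of the `(L+2)`-nd derivative and of
the sup norm of the `(L+1)`-st derivative. -/
theorem inductive_step_derivative_decay
    (p : ℝ) (hp : 1 ≤ p) (K : ℝ → ℝ → ℝ)
    (hsmooth : ContDiffOn ℝ (⊤ : ℕ∞) (fun q : ℝ × ℝ => K q.1 q.2) (univ ×ˢ Ici 0))
    (hper : ∀ τ : ℝ, Function.Periodic (fun θ => K θ τ) (2 * π))
    (hpos : ∀ θ τ : ℝ, 0 ≤ τ → 0 < K θ τ)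
    (hpde : ∀ θ : ℝ, ∀ τ ∈ Ioi (0:ℝ),
      deriv (fun s => K θ s) τ =
        p * K θ τ ^ (1 + 1 / p) * deriv (deriv (fun x => K x τ)) θ
          + p * K θ τ ^ (2 + 1 / p) - p * K θ τ)
    (hconv : TendstoUniformly (fun τ θ => K θ τ) (fun _ => 1) atTop)
    (α : ℝ) (hα0 : 0 < α) (hα1 : α < 1)
    (L : ℕ) (hL : 1 ≤ L) (CL : ℝ) (hCL : 0 < CL)
    (hsup : ∀ l : ℕ, 1 ≤ l → l ≤ L → ∀ τ : ℝ, 0 < τ → ∀ θ : ℝ,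
      |iteratedDeriv l (fun x => K x τ) θ| ≤ CL * Real.exp (-2 * α * p * τ))
    (hL2 : ∀ τ : ℝ, 0 < τ →
      (∫ θ in (0:ℝ)..(2 * π), (iteratedDeriv (L + 1) (fun x => K x τ) θ) ^ 2) ^ ((1:ℝ) / 2)
        ≤ CL * Real.exp (-2 * α * p * τ)) :
    ∃ C : ℝ, 0 < C ∧
      (∀ τ : ℝ, 0 < τ →
        (∫ θ in (0:ℝ)..(2 * π), (iteratedDeriv (L + 2) (fun x => K x τ) θ) ^ 2) ^ ((1:ℝ) / 2)
          ≤ C * Real.exp (-2 * α * p * τ)) ∧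
      (∀ τ : ℝ, 0 < τ → ∀ θ : ℝ,
        |iteratedDeriv (L + 1) (fun x => K x τ) θ| ≤ C * Real.exp (-2 * α * p * τ)) := by
  have hp0 : 0 < p := by linarith
  have hpi : 0 < 2 * π := by positivity
  obtain ⟨c₀, c₁, hc₀, hK⟩ :=
    exists_mem_Icc_of_tendstoUniformly_one hpi hsmooth.continuousOn hper hpos hconv
  set M : ℝ := max 1 CL with hM
  have hM1 : 1 ≤ M := le_max_left _ _
  have hMC : CL ≤ M := le_max_right _ _
  have hpow : ∀ r : ℝ, ContDiffOn ℝ (⊤ : ℕ∞) (fun y : ℝ => p * y ^ r) (Ioi 0) := fun r y hy =>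
    (contDiffAt_const.mul (Real.contDiffAt_rpow_const_of_ne hy.ne')).contDiffWithinAt
  obtain ⟨C, hC, H⟩ := exists_two_mul_integral_quasilinear_le (Φ := fun y => p * y ^ (1 + 1 / p))
    (g := fun y => p * y ^ (2 + 1 / p) - p * y) (hpow _)
    ((hpow _).sub (contDiffOn_const.mul contDiffOn_id)) hc₀ c₁
    (φ := p * c₀ ^ (1 + 1 / p)) (by positivity)
    (fun y hy => mul_le_mul_of_nonneg_left
      (Real.rpow_le_rpow hc₀.le hy.1 (by positivity)) hp0.le)
    hM1 hL (lam := 4 * α * p + 1) (by positivity)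
  have hm := contDiffOn_iteratedDeriv_fst hsmooth (L + 2)
  set E : ℝ → ℝ := fun τ =>
    ∫ θ in (0:ℝ)..(2 * π), iteratedDeriv (L + 2) (fun x => K x τ) θ ^ 2 with hE
  have hslice : ∀ τ : ℝ, 0 ≤ τ → ContDiff ℝ (⊤ : ℕ∞) (fun x => K x τ) := fun τ hτ =>
    contDiffOn_univ.1 (hsmooth.comp (contDiff_id.prodMk contDiff_const).contDiffOn
      fun x _ => ⟨mem_univ _, hτ⟩)
  have hexp : ∀ τ : ℝ, exp (-2 * α * p * τ) ^ 2 = exp (-(4 * α * p) * τ) := by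
    intro τ
    rw [sq, ← Real.exp_add]
    ring_nf
  have hE2 : ∀ τ : ℝ, 0 < τ →
      E τ ≤ (|C| + |E 0|) * exp (-2 * α * p * τ) ^ 2 := by
    intro τ hτ
    rw [hexp]
    refine le_mul_exp_neg_of_hasDerivAt_le
      (continuousOn_integral_sq_of_contDiffOn (f := fun y s => iteratedDeriv (L + 2)
        (fun x => K x s) y) hm (2 * π))
      (fun t ht => hasDerivAt_integral_sq_of_contDiffOn (f := fun y s => iteratedDeriv (L + 2)
        (fun x => K x s) y) hm (2 * π) ht) (fun t ht => ?_) hτ.le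
    have he1 : exp (-2 * α * p * t) ≤ 1 := by
      rw [Real.exp_le_one_iff]
      have : 0 < α * p * t := by positivity
      linarith
    have hpde' : (fun x => deriv (fun s => K x s) t) = fun x =>
        p * K x t ^ (1 + 1 / p) * deriv (deriv (fun x => K x t)) x
          + (p * K x t ^ (2 + 1 / p) - p * K x t) := by
      funext x
      rw [hpde x t ht, add_sub_assoc]
    have hA : ∫ θ in (0:ℝ)..(2 * π), iteratedDeriv (L + 1) (fun x => K x t) θ ^ 2
        ≤ (M * exp (-2 * α * p * t)) ^ 2 := by
      have h := hL2 t ht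
      rw [← Real.sqrt_eq_rpow, Real.sqrt_le_left (by positivity)] at h
      refine h.trans ?_
      gcongr
    have key := H (fun x => K x t) (hslice t ht.le) (hper t) (fun x => hK x t ht.le)
      (exp (-2 * α * p * t)) (exp_pos _) he1
      (fun i h1 h2 x => (hsup i h1 h2 t ht x).trans (by gcongr)) hA
    rw [← hpde', hexp] at key
    simp only [deriv_iteratedDeriv_swap_of_contDiffOn hsmooth (L + 2) _ ht]
    exact key
  set B := |C| + |E 0| with hB
  have hB0 : 0 ≤ B := by positivity
  have hpi1 : 1 ≤ 2 * π := by linarith [Real.pi_gt_three]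
  refine ⟨2 * π * B + 1, by positivity, fun τ hτ => ?_, fun τ hτ θ => ?_⟩
  · rw [← Real.sqrt_eq_rpow, Real.sqrt_le_left (by positivity), mul_pow]
    refine (hE2 τ hτ).trans (mul_le_mul_of_nonneg_right ?_ (sq_nonneg _))
    nlinarith [mul_le_mul_of_nonneg_right hpi1 hB0]
  · apply abs_le_of_sq_le_sq _ (by positivity)
    have h := sq_deriv_le_integral_sq_of_periodic (w := iteratedDeriv L fun x => K x τ) hpi
      ((contDiff_iteratedDeriv_top (hslice τ hτ.le) L).of_le (WithTop.coe_le_coe.2 le_top))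
      (periodic_iteratedDeriv (hper τ) L) θ
    rw [← iteratedDeriv_succ, ← iteratedDeriv_succ] at h
    refine h.trans ((mul_le_mul_of_nonneg_left (hE2 τ hτ) hpi.le).trans ?_)
    rw [mul_pow, ← mul_assoc]
    refine mul_le_mul_of_nonneg_right ?_ (sq_nonneg _)
    nlinarith [mul_le_mul_of_nonneg_right hpi1 hB0]
end

section
/- Let p ≥ 1 be a real number. Let k̃ : ℝ × [0,∞) → ℝ be a smooth function, 2π-periodic in its first (angular) variable θ, with k̃(θ,τ) > 0 everywhere, satisfying the rescaled curve-shortening equation ∂k̃/∂τ = p·k̃^{1+1/p}·∂²k̃/∂θ² + p·k̃^{2+1/p} − p·k̃ on ℝ × (0,∞), and suppose sup_θ |k̃(θ,τ) − 1| → 0 as τ → ∞. Then for every integer l ≥ 1 and every constant α with 0 < α < 1 there exists a constant C(l,p) > 0, depending only on l, p, α and the initial data k̃(·,0), such that for all τ > 0: sup_θ |∂^l k̃/∂θ^l (θ,τ)| ≤ C(l,p)·exp(−2αp·τ). -/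
open Real Filter Set

/-- Smooth `2π`-periodic functions on the line. -/
def SmoothPeriodic (u : ℝ → ℝ) : Prop :=
  ContDiff ℝ (⊤ : ℕ∞) u ∧ Function.Periodic u (2 * π)

/-- The square of the `L²` norm over one period. -/
noncomputable def energy (u : ℝ → ℝ) : ℝ := ∫ x in (0 : ℝ)..2 * π, u x ^ 2

namespace SmoothPeriodic

variable {u v : ℝ → ℝ}

protected theorem continuous (hu : SmoothPeriodic u) : Continuous u := hu.1.continuous

protected theorem differentiable (hu : SmoothPeriodic u) : Differentiable ℝ u :=
  hu.1.differentiable (by simp)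

protected theorem hasDerivAt (hu : SmoothPeriodic u) (x : ℝ) : HasDerivAt u (deriv u x) x :=
  (hu.differentiable x).hasDerivAt

protected theorem deriv (hu : SmoothPeriodic u) : SmoothPeriodic (deriv u) := by
  refine ⟨?_, fun x => ?_⟩
  · exact (contDiff_infty_iff_deriv.1 hu.1).2
  · rw [← deriv_comp_add_const]
    congr 1
    exact funext hu.2

protected theorem iteratedDeriv (hu : SmoothPeriodic u) (n : ℕ) :
    SmoothPeriodic (iteratedDeriv n u) := by
  induction n with
  | zero => simpa using hu
  | succ n ih => rw [iteratedDeriv_succ]; exact ih.deriv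

protected theorem mul (hu : SmoothPeriodic u) (hv : SmoothPeriodic v) :
    SmoothPeriodic (fun x => u x * v x) :=
  ⟨hu.1.mul hv.1, hu.2.mul hv.2⟩

protected theorem add (hu : SmoothPeriodic u) (hv : SmoothPeriodic v) :
    SmoothPeriodic (fun x => u x + v x) :=
  ⟨hu.1.add hv.1, hu.2.add hv.2⟩

protected theorem const (c : ℝ) : SmoothPeriodic (fun _ => c) :=
  ⟨contDiff_const, fun _ => rfl⟩

protected theorem const_mul (c : ℝ) (hu : SmoothPeriodic u) : SmoothPeriodic (fun x => c * u x) :=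
  (SmoothPeriodic.const c).mul hu

protected theorem sub (hu : SmoothPeriodic u) (hv : SmoothPeriodic v) :
    SmoothPeriodic (fun x => u x - v x) :=
  ⟨hu.1.sub hv.1, hu.2.sub hv.2⟩

protected theorem pow (hu : SmoothPeriodic u) (n : ℕ) : SmoothPeriodic (fun x => u x ^ n) :=
  ⟨hu.1.pow n, fun x => by simp only [hu.2 x]⟩

protected theorem rpow (hu : SmoothPeriodic u) (h0 : ∀ x, 0 < u x) (s : ℝ) :
    SmoothPeriodic (fun x => u x ^ s) :=
  ⟨hu.1.rpow_const_of_ne fun x => (h0 x).ne', fun x => by simp only [hu.2 x]⟩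

protected theorem sin : SmoothPeriodic Real.sin := ⟨Real.contDiff_sin, Real.sin_periodic⟩

protected theorem cos : SmoothPeriodic Real.cos := ⟨Real.contDiff_cos, Real.cos_periodic⟩

protected theorem deriv_rpow (hu : SmoothPeriodic u) (h0 : ∀ x, 0 < u x) (s : ℝ) :
    deriv (fun x => u x ^ s) = fun x => s * u x ^ (s - 1) * deriv u x := by
  funext x
  rw [((hu.hasDerivAt x).rpow_const (Or.inl (h0 x).ne')).deriv]
  ring

protected theorem deriv_mul (hu : SmoothPeriodic u) (hv : SmoothPeriodic v) :
    deriv (fun x => u x * v x) =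
      fun x => deriv u x * v x + u x * deriv v x := by
  funext x
  exact ((hu.hasDerivAt x).mul (hv.hasDerivAt x)).deriv

protected theorem deriv_add (hu : SmoothPeriodic u) (hv : SmoothPeriodic v) :
    deriv (fun x => u x + v x) = fun x => deriv u x + deriv v x := by
  funext x
  exact ((hu.hasDerivAt x).add (hv.hasDerivAt x)).deriv

protected theorem integral_deriv (hu : SmoothPeriodic u) :
    ∫ x in (0 : ℝ)..2 * π, deriv u x = 0 := by
  rw [intervalIntegral.integral_eq_sub_of_hasDerivAt (fun x _ => hu.hasDerivAt x)
    (hu.deriv.continuous.intervalIntegrable _ _)]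
  have := hu.2 0
  rw [zero_add] at this
  rw [this, sub_self]

protected theorem integral_mul_deriv (hu : SmoothPeriodic u) (hv : SmoothPeriodic v) :
    ∫ x in (0 : ℝ)..2 * π, u x * deriv v x =
      -∫ x in (0 : ℝ)..2 * π, deriv u x * v x := by
  have h := (hu.mul hv).integral_deriv
  rw [hu.deriv_mul hv, intervalIntegral.integral_add
    ((hu.deriv.mul hv).continuous.intervalIntegrable _ _)
    ((hu.mul hv.deriv).continuous.intervalIntegrable _ _)] at h
  linarith

end SmoothPeriodic

theorem integral_period_mono {f g : ℝ → ℝ} (hf : Continuous f) (hg : Continuous g)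
    (h : ∀ x, f x ≤ g x) : ∫ x in (0 : ℝ)..2 * π, f x ≤ ∫ x in (0 : ℝ)..2 * π, g x :=
  intervalIntegral.integral_mono (by positivity) (hf.intervalIntegrable _ _)
    (hg.intervalIntegrable _ _) h

theorem integral_period_linear {g h : ℝ → ℝ} (hg : Continuous g) (hh : Continuous h) (a b : ℝ) :
    ∫ x in (0 : ℝ)..2 * π, (a * g x + b * h x) =
      a * (∫ x in (0 : ℝ)..2 * π, g x) + b * ∫ x in (0 : ℝ)..2 * π, h x := by
  rw [intervalIntegral.integral_add ((hg.const_mul a).intervalIntegrable _ _)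
    ((hh.const_mul b).intervalIntegrable _ _), intervalIntegral.integral_const_mul,
    intervalIntegral.integral_const_mul]

theorem integral_period_le_linear {f g h : ℝ → ℝ} (hf : Continuous f) (hg : Continuous g)
    (hh : Continuous h) (a b : ℝ) (hle : ∀ x, f x ≤ a * g x + b * h x) :
    ∫ x in (0 : ℝ)..2 * π, f x ≤
      a * (∫ x in (0 : ℝ)..2 * π, g x) + b * ∫ x in (0 : ℝ)..2 * π, h x := by
  rw [← integral_period_linear hg hh]
  exact integral_period_mono hf (by fun_prop) hle

theorem energy_nonneg (u : ℝ → ℝ) : 0 ≤ energy u :=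
  intervalIntegral.integral_nonneg (by positivity) fun x _ => sq_nonneg _

theorem energy_add_le {u v : ℝ → ℝ} (hu : Continuous u) (hv : Continuous v) :
    energy (fun x => u x + v x) ≤ 2 * energy u + 2 * energy v :=
  integral_period_le_linear (by fun_prop) (by fun_prop) (by fun_prop) 2 2 fun x => by
    nlinarith [sq_nonneg (u x - v x)]

theorem energy_const_mul (c : ℝ) (u : ℝ → ℝ) :
    energy (fun x => c * u x) = c ^ 2 * energy u := by
  simp only [energy, mul_pow, intervalIntegral.integral_const_mul]

theorem energy_mul_le {u v : ℝ → ℝ} (hu : Continuous u) (hv : Continuous v) {M : ℝ}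
    (hM : ∀ x, u x ^ 2 ≤ M) : energy (fun x => u x * v x) ≤ M * energy v := by
  have := integral_period_le_linear (f := fun x => (u x * v x) ^ 2) (g := fun x => v x ^ 2)
    (h := fun x => v x ^ 2) (by fun_prop) (by fun_prop) (by fun_prop) M 0 fun x => by
      rw [mul_pow]; nlinarith [mul_le_mul_of_nonneg_right (hM x) (sq_nonneg (v x))]
  simpa [energy] using this

/-- Sobolev embedding on the circle. -/
theorem SmoothPeriodic.sq_le {u : ℝ → ℝ} (hu : SmoothPeriodic u) (x : ℝ) :
    u x ^ 2 ≤ 2 * (energy u + energy (deriv u)) := by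
  have hpi := Real.pi_gt_three
  wlog hx : x ∈ Ico 0 (2 * π) generalizing x
  · obtain ⟨y, hy, hxy⟩ := hu.2.exists_mem_Ico₀ (by positivity) x
    rw [hxy]; exact this y hy
  obtain ⟨y, hy, hyu⟩ : ∃ y ∈ Icc 0 (2 * π), u y ^ 2 ≤ energy u := by
    by_contra! hcon
    have h1 : ∫ _ in (0 : ℝ)..2 * π, energy u ≤ energy u :=
      intervalIntegral.integral_mono_on (by positivity) (by simp)
        ((hu.continuous.pow 2).intervalIntegrable _ _) fun z hz => (hcon z hz).le
    have h2 := hcon 0 ⟨le_rfl, by positivity⟩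
    have h3 : energy u = 0 := by
      have := energy_nonneg u
      simp at h1
      nlinarith
    have h4 : 0 < energy u := intervalIntegral.integral_pos (by positivity)
      (hu.continuous.pow 2).continuousOn (fun z _ => sq_nonneg _)
      ⟨0, ⟨le_rfl, by positivity⟩, h3 ▸ h2⟩
    linarith
  have hder : ∀ z, HasDerivAt (fun z => u z ^ 2) (2 * u z * deriv u z) z := fun z => by
    simpa using! (hu.hasDerivAt z).fun_pow 2
  have hcont : Continuous fun z => 2 * u z * deriv u z := by
    have := hu.continuous
    have := hu.deriv.continuous
    fun_prop
  have hcont' : Continuous fun z => u z ^ 2 + deriv u z ^ 2 := by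
    have := hu.continuous
    have := hu.deriv.continuous
    fun_prop
  have hdiff := intervalIntegral.integral_eq_sub_of_hasDerivAt (a := y) (b := x)
    (fun z _ => hder z) (hcont.intervalIntegrable _ _)
  have hle : |∫ z in y..x, 2 * u z * deriv u z| ≤ energy u + energy (deriv u) := by
    have e : energy u + energy (deriv u) =
        ∫ z in (0 : ℝ)..2 * π, (u z ^ 2 + deriv u z ^ 2) := by
      simpa [energy] using (integral_period_linear (hu.continuous.pow 2)
        (hu.deriv.continuous.pow 2) 1 1).symm
    rw [e, intervalIntegral.integral_of_le (by positivity : (0:ℝ) ≤ 2 * π), ← Real.norm_eq_abs]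
    refine (intervalIntegral.norm_integral_le_integral_norm_uIoc).trans ?_
    calc _ ≤ ∫ z in uIoc y x, (u z ^ 2 + deriv u z ^ 2) := by
          refine MeasureTheory.setIntegral_mono hcont.norm.integrableOn_uIoc
            hcont'.integrableOn_uIoc fun z => ?_
          rw [Real.norm_eq_abs, abs_le]
          constructor <;> nlinarith [sq_nonneg (u z - deriv u z), sq_nonneg (u z + deriv u z)]
      _ ≤ _ := by
          refine MeasureTheory.setIntegral_mono_set ?_ (Eventually.of_forall fun z => by positivity)
            (LE.le.eventuallyLE ?_)
          · exact (hcont'.integrableOn_Icc).mono_set Ioc_subset_Icc_self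
          · exact Ioc_subset_Ioc (le_min hy.1 hx.1) (max_le hy.2 hx.2.le)
  rw [hdiff] at hle
  linarith [(abs_le.1 hle).2, energy_nonneg (deriv u)]

theorem hasSum_sq_fourierCoeffOn_ofReal {u : ℝ → ℝ} (hu : Continuous u) :
    HasSum (fun n : ℤ => ‖fourierCoeffOn Real.two_pi_pos (fun x => (u x : ℂ)) n‖ ^ 2)
      ((2 * π)⁻¹ * energy u) := by
  have hmem : MeasureTheory.MemLp (fun x => (u x : ℂ)) 2
      (MeasureTheory.volume.restrict (Ioc 0 (2 * π))) :=
    (MeasureTheory.memLp_two_iff_integrable_sq_norm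
      (Complex.continuous_ofReal.comp hu).aestronglyMeasurable).2
      ((Complex.continuous_ofReal.comp hu).norm.pow 2).integrableOn_Ioc
  simpa [energy] using hasSum_sq_fourierCoeffOn Real.two_pi_pos hmem

theorem SmoothPeriodic.norm_sq_fourierCoeffOn_deriv {u : ℝ → ℝ} (hu : SmoothPeriodic u) {n : ℤ}
    (hn : n ≠ 0) :
    ‖fourierCoeffOn Real.two_pi_pos (fun x => ((deriv u x : ℝ) : ℂ)) n‖ ^ 2 =
      (n : ℝ) ^ 2 * ‖fourierCoeffOn Real.two_pi_pos (fun x => (u x : ℂ)) n‖ ^ 2 := by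
  have h := fourierCoeffOn_of_hasDerivAt Real.two_pi_pos (f := fun x => (u x : ℂ))
    (f' := fun x => ((deriv u x : ℝ) : ℂ)) hn (fun x _ => (hu.hasDerivAt x).ofReal_comp)
    ((Complex.continuous_ofReal.comp hu.deriv.continuous).intervalIntegrable _ _)
  have h2 : u (2 * π) = u 0 := by simpa using hu.2 0
  rw [h, h2]
  have hn' : (n : ℝ) ≠ 0 := by exact_mod_cast hn
  have hpi := Real.pi_pos.ne'
  simp [mul_pow, abs_of_pos Real.pi_pos]
  field_simp

theorem fourierCoeffOn_zero_of_integral_eq_zero {u : ℝ → ℝ}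
    (h0 : ∫ x in (0 : ℝ)..2 * π, u x = 0) :
    fourierCoeffOn Real.two_pi_pos (fun x => (u x : ℂ)) 0 = 0 := by
  rw [fourierCoeffOn_eq_integral]
  have : ∫ x in (0 : ℝ)..2 * π, (u x : ℂ) = 0 := by
    rw [intervalIntegral.integral_ofReal, h0, Complex.ofReal_zero]
  simp [this]

theorem norm_sq_fourierCoeffOn_of_abs_eq_one {u : ℝ → ℝ} (hu : Continuous u) {n : ℤ}
    (hn : n = 1 ∨ n = -1) :
    ‖fourierCoeffOn Real.two_pi_pos (fun x => (u x : ℂ)) n‖ ^ 2 =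
      ((2 * π)⁻¹) ^ 2 * ((∫ x in (0 : ℝ)..2 * π, u x * Real.cos x) ^ 2 +
        (∫ x in (0 : ℝ)..2 * π, u x * Real.sin x) ^ 2) := by
  have key : ∫ x in (0 : ℝ)..2 * π, (fourier (-n) (x : AddCircle (2 * π - 0))) • (u x : ℂ) =
      ((∫ x in (0 : ℝ)..2 * π, u x * Real.cos x : ℝ) : ℂ) -
        n * ((∫ x in (0 : ℝ)..2 * π, u x * Real.sin x : ℝ) : ℂ) * Complex.I := by
    rw [← intervalIntegral.integral_ofReal, ← intervalIntegral.integral_ofReal,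
      ← intervalIntegral.integral_const_mul, ← intervalIntegral.integral_mul_const,
      ← intervalIntegral.integral_sub]
    · refine intervalIntegral.integral_congr fun x _ => ?_
      have e : 2 * (π : ℂ) * Complex.I * ((-n : ℤ) : ℂ) * (x : ℂ) / ((2 * π - 0 : ℝ) : ℂ) =
          ((-n * x : ℝ) : ℂ) * Complex.I := by
        have : (π : ℂ) ≠ 0 := by exact_mod_cast Real.pi_ne_zero
        push_cast
        field_simp
        ring
      simp only [fourier_coe_apply, smul_eq_mul]
      rw [e, Complex.exp_mul_I, ← Complex.ofReal_cos, ← Complex.ofReal_sin]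
      rcases hn with rfl | rfl <;> simp <;> ring
    · exact Continuous.intervalIntegrable (by fun_prop) _ _
    · exact Continuous.intervalIntegrable (by fun_prop) _ _
  rw [fourierCoeffOn_eq_integral, key, norm_smul, mul_pow, ← Complex.normSq_eq_norm_sq]
  congr 1
  · simp [abs_of_pos Real.pi_pos]
  · rcases hn with rfl | rfl <;> simp [Complex.normSq_apply] <;> ring

/-- Wirtinger's inequality. -/
theorem SmoothPeriodic.energy_le_energy_deriv {u : ℝ → ℝ} (hu : SmoothPeriodic u)
    (h0 : ∫ x in (0 : ℝ)..2 * π, u x = 0) : energy u ≤ energy (deriv u) := by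
  have h := hasSum_le (fun n => ?_) (hasSum_sq_fourierCoeffOn_ofReal hu.continuous)
    (hasSum_sq_fourierCoeffOn_ofReal hu.deriv.continuous)
  · exact le_of_mul_le_mul_left h (by positivity)
  · rcases eq_or_ne n 0 with rfl | hn
    · rw [fourierCoeffOn_zero_of_integral_eq_zero h0]
      simp
    · rw [hu.norm_sq_fourierCoeffOn_deriv hn]
      have : (1 : ℝ) ≤ (n : ℝ) ^ 2 := by
        have : (1 : ℤ) ≤ n ^ 2 := by have := sq_pos_of_ne_zero hn; omega
        exact_mod_cast this
      exact le_mul_of_one_le_left (by positivity) this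

/-- Wirtinger's inequality with the sharp constant for functions without first harmonics. -/
theorem SmoothPeriodic.four_mul_energy_le {u : ℝ → ℝ} (hu : SmoothPeriodic u)
    (h0 : ∫ x in (0 : ℝ)..2 * π, u x = 0) :
    4 * energy u - 3 / π * ((∫ x in (0 : ℝ)..2 * π, u x * Real.cos x) ^ 2 +
        (∫ x in (0 : ℝ)..2 * π, u x * Real.sin x) ^ 2) ≤ energy (deriv u) := by
  set Q := (∫ x in (0 : ℝ)..2 * π, u x * Real.cos x) ^ 2 +
        (∫ x in (0 : ℝ)..2 * π, u x * Real.sin x) ^ 2 with hQ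
  have s := (((hasSum_sq_fourierCoeffOn_ofReal hu.continuous).mul_left 4).sub
    (hasSum_ite_eq (1 : ℤ) (3 * (((2 * π)⁻¹) ^ 2 * Q)))).sub
    (hasSum_ite_eq (-1 : ℤ) (3 * (((2 * π)⁻¹) ^ 2 * Q)))
  have h := hasSum_le (fun n => ?_) s (hasSum_sq_fourierCoeffOn_ofReal hu.deriv.continuous)
  · have hpi := Real.pi_pos
    have e : 4 * energy u - 3 / π * Q = 2 * π * (4 * ((2 * π)⁻¹ * energy u) -
        3 * ((2 * π)⁻¹ ^ 2 * Q) - 3 * ((2 * π)⁻¹ ^ 2 * Q)) := by field_simp; ring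
    rw [e]
    refine (mul_le_mul_of_nonneg_left h (by positivity)).trans_eq ?_
    field_simp
  · rcases eq_or_ne n 0 with rfl | hn
    · rw [fourierCoeffOn_zero_of_integral_eq_zero h0]
      simp
    · rw [hu.norm_sq_fourierCoeffOn_deriv hn]
      by_cases h1 : n = 1 ∨ n = -1
      · rw [norm_sq_fourierCoeffOn_of_abs_eq_one hu.continuous h1, ← hQ]
        rcases h1 with rfl | rfl <;> norm_num <;> linarith
      · have h2 : 2 ≤ |n| := by
          by_contra! hcon
          have := Int.one_le_abs hn
          have : |n| = 1 := by omega
          exact h1 ((abs_eq (by norm_num)).1 this)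
        have h4 : (4 : ℝ) ≤ (n : ℝ) ^ 2 := by
          have : (4 : ℤ) ≤ n ^ 2 := by rw [← sq_abs]; nlinarith
          exact_mod_cast this
        push Not at h1
        simp only [if_neg h1.1, if_neg h1.2, sub_zero]
        exact mul_le_mul_of_nonneg_right h4 (by positivity)

theorem SmoothPeriodic.energy_deriv_le {u : ℝ → ℝ} (hu : SmoothPeriodic u) :
    energy (deriv u) ≤ energy (deriv (deriv u)) :=
  hu.deriv.energy_le_energy_deriv hu.integral_deriv

theorem SmoothPeriodic.energy_iteratedDeriv_mono {u : ℝ → ℝ} (hu : SmoothPeriodic u) {m n : ℕ}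
    (hm : 1 ≤ m) (hmn : m ≤ n) :
    energy (_root_.iteratedDeriv m u) ≤ energy (_root_.iteratedDeriv n u) := by
  induction n, hmn using Nat.le_induction with
  | base => exact le_rfl
  | succ n hn ih =>
    refine ih.trans ?_
    obtain ⟨k, rfl⟩ : ∃ k, n = k + 1 := ⟨n - 1, by omega⟩
    have := (hu.iteratedDeriv k).energy_deriv_le
    rwa [← iteratedDeriv_succ, ← iteratedDeriv_succ] at this

theorem SmoothPeriodic.energy_deriv_interpolation {u : ℝ → ℝ} (hu : SmoothPeriodic u) {ε : ℝ}
    (hε : 0 < ε) :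
    energy (deriv u) ≤ ε * energy (deriv (deriv u)) + 1 / (4 * ε) * energy u := by
  have h := hu.integral_mul_deriv hu.deriv
  have c0 := hu.continuous
  have c2 := hu.deriv.deriv.continuous
  have h2 := integral_period_le_linear (f := fun x => -(u x * deriv (deriv u) x))
    (g := fun x => deriv (deriv u) x ^ 2) (h := fun x => u x ^ 2)
    (by fun_prop) (by fun_prop) (by fun_prop) ε (1 / (4 * ε)) fun x => by
      have : ε * deriv (deriv u) x ^ 2 + 1 / (4 * ε) * u x ^ 2 + u x * deriv (deriv u) x =
        ε * (deriv (deriv u) x + u x / (2 * ε)) ^ 2 := by field_simp; ring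
      have : 0 ≤ ε * (deriv (deriv u) x + u x / (2 * ε)) ^ 2 := by positivity
      linarith
  rw [intervalIntegral.integral_neg, h, neg_neg] at h2
  simpa [energy, sq] using h2

/-- For a function close to a constant, `u' u''` is controlled by a small multiple of `u'''`
in `L²`. -/
theorem SmoothPeriodic.energy_deriv_mul_deriv_le {u : ℝ → ℝ} (hu : SmoothPeriodic u) {c δ : ℝ}
    (hpos : 0 < δ) (hδ : ∀ x, |u x - c| ≤ δ) :
    energy (fun x => deriv u x * deriv (deriv u) x) ≤
      25 / 9 * δ ^ 2 * energy (deriv (deriv (deriv u))) := by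
  set u1 := deriv u with hu1
  set u2 := deriv u1 with hu2
  set u3 := deriv u2 with hu3
  have s1 : SmoothPeriodic u1 := hu.deriv
  have s2 : SmoothPeriodic u2 := s1.deriv
  have s3 : SmoothPeriodic u3 := s2.deriv
  have c0 := hu.continuous
  have c1 := s1.continuous
  have c2 := s2.continuous
  have c3 := s3.continuous
  set I := energy (fun x => u1 x * u2 x) with hI
  set J := ∫ x in (0 : ℝ)..2 * π, u1 x ^ 6 with hJ
  have hI0 : 0 ≤ I := energy_nonneg _
  have hJ0 : 0 ≤ J := intervalIntegral.integral_nonneg (by positivity) fun x _ => by positivity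
  -- `J` in terms of `I`
  have hd5 : deriv (fun x => u1 x ^ 5) = fun x => 5 * u1 x ^ 4 * u2 x := by
    funext x
    simpa using ((s1.hasDerivAt x).fun_pow 5).deriv
  have hdw : deriv (fun x => u x - c) = u1 := by
    funext x
    exact ((hu.hasDerivAt x).sub_const c).deriv
  have ibp1 := (hu.sub (SmoothPeriodic.const c)).integral_mul_deriv (s1.pow 5)
  rw [hd5, hdw] at ibp1
  have hJI : J ≤ 25 * δ ^ 2 * I := by
    have h1 : J = ∫ x in (0 : ℝ)..2 * π, -((u x - c) * (5 * u1 x ^ 4 * u2 x)) := by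
      rw [intervalIntegral.integral_neg, ibp1, neg_neg]
      exact intervalIntegral.integral_congr fun x _ => by ring
    have h2 : J ≤ 1 / 2 * J + 25 / 2 * δ ^ 2 * I := by
      conv_lhs => rw [h1]
      refine integral_period_le_linear (by fun_prop) (by fun_prop) (by fun_prop) _ _ fun x => ?_
      have h3 : (u x - c) ^ 2 ≤ δ ^ 2 := sq_le_sq' (by linarith [(abs_le.1 (hδ x)).1])
        (abs_le.1 (hδ x)).2
      have h4 := mul_le_mul_of_nonneg_right h3 (sq_nonneg (u1 x * u2 x))
      nlinarith [sq_nonneg (u1 x ^ 3 + 5 * (u x - c) * (u1 x * u2 x))]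
    linarith
  have hd3 : deriv (fun x => u1 x ^ 3) = fun x => 3 * u1 x ^ 2 * u2 x := by
    funext x
    simpa using ((s1.hasDerivAt x).fun_pow 3).deriv
  have ibp2 := s2.integral_mul_deriv (s1.pow 3)
  rw [hd3] at ibp2
  have hI1 : I = ∫ x in (0 : ℝ)..2 * π, -(1 / 3) * (u3 x * u1 x ^ 3) := by
    rw [intervalIntegral.integral_const_mul]
    have : 3 * I = ∫ x in (0 : ℝ)..2 * π, u2 x * (3 * u1 x ^ 2 * u2 x) := by
      rw [hI, energy, ← intervalIntegral.integral_const_mul]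
      exact intervalIntegral.integral_congr fun x _ => by ring
    rw [ibp2] at this
    linarith
  have := integral_period_le_linear (f := fun x => -(1 / 3) * (u3 x * u1 x ^ 3))
    (g := fun x => u3 x ^ 2) (h := fun x => u1 x ^ 6) (by fun_prop) (by fun_prop)
    (by fun_prop) (25 / 18 * δ ^ 2) (1 / (50 * δ ^ 2)) fun x => by
      have e : 25 / 18 * δ ^ 2 * u3 x ^ 2 + 1 / (50 * δ ^ 2) * u1 x ^ 6 -
          -(1 / 3) * (u3 x * u1 x ^ 3) =
        25 / 18 * (δ * u3 x + 3 / (25 * δ) * u1 x ^ 3) ^ 2 := by field_simp; ring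
      have : 0 ≤ 25 / 18 * (δ * u3 x + 3 / (25 * δ) * u1 x ^ 3) ^ 2 := by positivity
      linarith
  rw [← hI1, ← hJ] at this
  have h7 : 1 / (50 * δ ^ 2) * J ≤ 1 / 2 * I := by
    rw [one_div_mul_eq_div, div_le_iff₀ (by positivity)]
    linarith
  change I ≤ 25 / 18 * δ ^ 2 * energy u3 + _ at this
  linarith

/-- The derivatives of `u` of order at most `n` have `energy` at most `A`. -/
def SobolevBound (u : ℝ → ℝ) (n : ℕ) (A : ℝ) : Prop :=
  ∀ j ≤ n, energy (iteratedDeriv j u) ≤ A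

namespace SobolevBound

variable {u v : ℝ → ℝ} {n m : ℕ} {A B : ℝ}

protected theorem nonneg (h : SobolevBound u n A) : 0 ≤ A :=
  (energy_nonneg _).trans (h 0 (Nat.zero_le _))

protected theorem mono (h : SobolevBound u n A) (hm : m ≤ n) : SobolevBound u m A :=
  fun j hj => h j (hj.trans hm)

protected theorem mono_right (h : SobolevBound u n A) (hB : A ≤ B) : SobolevBound u n B :=
  fun j hj => (h j hj).trans hB

protected theorem deriv (h : SobolevBound u (n + 1) A) : SobolevBound (deriv u) n A :=
  fun j hj => by
  rw [← iteratedDeriv_succ']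
  exact h (j + 1) (by omega)

theorem of_deriv (h0 : energy u ≤ A) (h : SobolevBound (deriv u) n A) :
    SobolevBound u (n + 1) A := fun j hj => by
  rcases j with _ | j
  · simpa using h0
  · rw [iteratedDeriv_succ']
    exact h j (by omega)

end SobolevBound

section

variable {u v : ℝ → ℝ}

theorem SmoothPeriodic.iteratedDeriv_add (hu : SmoothPeriodic u) (hv : SmoothPeriodic v) (n : ℕ) :
    _root_.iteratedDeriv n (fun x => u x + v x) =
      fun x => _root_.iteratedDeriv n u x + _root_.iteratedDeriv n v x := by
  induction n generalizing u v with
  | zero => simp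
  | succ n ih =>
    simp only [iteratedDeriv_succ']
    rw [hu.deriv_add hv, ih hu.deriv hv.deriv]

theorem SmoothPeriodic.iteratedDeriv_const_mul (hu : SmoothPeriodic u) (c : ℝ) (n : ℕ) :
    _root_.iteratedDeriv n (fun x => c * u x) = fun x => c * _root_.iteratedDeriv n u x := by
  induction n generalizing u with
  | zero => simp
  | succ n ih =>
    simp only [iteratedDeriv_succ']
    have : deriv (fun x => c * u x) = fun x => c * deriv u x := by
      funext x
      exact ((hu.hasDerivAt x).const_mul c).deriv
    rw [this, ih hu.deriv]

protected theorem SobolevBound.const_mul {n : ℕ} {A : ℝ} (hu : SmoothPeriodic u)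
    (h : SobolevBound u n A)
    (c : ℝ) : SobolevBound (fun x => c * u x) n (c ^ 2 * A) := fun j hj => by
  rw [hu.iteratedDeriv_const_mul, energy_const_mul]
  exact mul_le_mul_of_nonneg_left (h j hj) (sq_nonneg c)

protected theorem SobolevBound.add {n : ℕ} {A B : ℝ} (hu : SmoothPeriodic u) (hv : SmoothPeriodic v)
    (h : SobolevBound u n A) (h' : SobolevBound v n B) :
    SobolevBound (fun x => u x + v x) n (2 * A + 2 * B) := fun j hj => by
  rw [hu.iteratedDeriv_add hv]
  have := energy_add_le (hu.iteratedDeriv j).continuous (hv.iteratedDeriv j).continuous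
  linarith [h j hj, h' j hj]

theorem SobolevBound.sq_le {A : ℝ} (hu : SmoothPeriodic u) (h : SobolevBound u 1 A) (x : ℝ) :
    u x ^ 2 ≤ 4 * A := by
  have h0 := h 0 (by omega)
  have h1 := h 1 le_rfl
  rw [iteratedDeriv_zero] at h0
  rw [iteratedDeriv_one] at h1
  linarith [hu.sq_le x]

theorem energy_iteratedDeriv_mul_le_aux (n : ℕ) {A B : ℝ} (hu : SmoothPeriodic u)
    (hv : SmoothPeriodic v) (hA : SobolevBound u (n + 1) A) (hB : SobolevBound v n B) :
    energy (iteratedDeriv n (fun x => u x * v x)) ≤ 4 ^ (n + 1) * A * B := by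
  induction n generalizing u v with
  | zero =>
    rw [iteratedDeriv_zero]
    have h := energy_mul_le hu.continuous hv.continuous (hA.sq_le hu)
    have h0 := hB 0 le_rfl
    rw [iteratedDeriv_zero] at h0
    have := mul_le_mul_of_nonneg_left h0 hA.nonneg
    rw [zero_add, pow_one]
    linarith
  | succ n ih =>
    rw [iteratedDeriv_succ', hu.deriv_mul hv, (hu.deriv.mul hv).iteratedDeriv_add (hu.mul hv.deriv)]
    refine (energy_add_le ((hu.deriv.mul hv).iteratedDeriv n).continuous
      ((hu.mul hv.deriv).iteratedDeriv n).continuous).trans ?_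
    have h1 := ih hu.deriv hv hA.deriv (hB.mono (Nat.le_succ n))
    have h2 := ih hu hv.deriv (hA.mono (Nat.le_succ _)) hB.deriv
    rw [pow_succ]
    linarith

theorem SobolevBound.mul_of_succ {n : ℕ} {A B : ℝ} (hu : SmoothPeriodic u)
    (hv : SmoothPeriodic v) (hA : SobolevBound u (n + 1) A) (hB : SobolevBound v n B) :
    SobolevBound (fun x => u x * v x) n (4 ^ (n + 1) * A * B) := fun j hj => by
  refine (energy_iteratedDeriv_mul_le_aux j hu hv (hA.mono (by omega)) (hB.mono hj)).trans ?_
  have := hA.nonneg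
  have := hB.nonneg
  gcongr
  norm_num

/-- The Sobolev spaces of positive order on the circle are algebras. -/
protected theorem SobolevBound.mul {n : ℕ} {A B : ℝ} (hu : SmoothPeriodic u)
    (hv : SmoothPeriodic v) (hA : SobolevBound u (n + 1) A) (hB : SobolevBound v (n + 1) B) :
    SobolevBound (fun x => u x * v x) (n + 1) (4 ^ (n + 2) * A * B) := by
  have hA0 := hA.nonneg
  have hB0 := hB.nonneg
  have hAB := mul_nonneg hA0 hB0
  refine SobolevBound.of_deriv ?_ ?_
  · have h0 := energy_iteratedDeriv_mul_le_aux 0 hu hv (hA.mono (by omega)) (hB.mono (by omega))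
    rw [iteratedDeriv_zero] at h0
    refine h0.trans ?_
    gcongr <;> norm_num
  · rw [hu.deriv_mul hv]
    have h1 := SobolevBound.mul_of_succ hv hu.deriv hB hA.deriv
    have h2 := SobolevBound.mul_of_succ hu hv.deriv hA hB.deriv
    have e : (fun x => deriv u x * v x) = fun x => v x * deriv u x := by
      funext x
      ring
    have h3 := SobolevBound.add (hu.deriv.mul hv) (hu.mul hv.deriv) (e ▸ h1) h2
    refine h3.mono_right ?_
    rw [pow_succ 4 (n + 1)]
    linarith

/-- A commutator estimate. -/
theorem exists_energy_commutator_le (n : ℕ) : ∃ D : ℝ, 0 ≤ D ∧ ∀ a w : ℝ → ℝ, ∀ A W : ℝ,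
    SmoothPeriodic a → SmoothPeriodic w → (∀ x, deriv a x ^ 2 ≤ A) →
    SobolevBound (deriv a) n A → SobolevBound w n W →
    energy (fun x => iteratedDeriv (n + 1) (fun x => a x * w x) x -
      a x * iteratedDeriv (n + 1) w x) ≤ D * A * W := by
  induction n with
  | zero =>
    refine ⟨1, zero_le_one, fun a w A W ha hw hsup hA hW => ?_⟩
    simp only [zero_add, iteratedDeriv_one]
    rw [ha.deriv_mul hw]
    simp only [add_sub_cancel_right]
    have h := energy_mul_le ha.deriv.continuous hw.continuous hsup
    have h0 := hW 0 le_rfl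
    rw [iteratedDeriv_zero] at h0
    have := mul_le_mul_of_nonneg_left h0 hA.nonneg
    linarith
  | succ n ih =>
    obtain ⟨D, hD, ih⟩ := ih
    refine ⟨2 * 4 ^ (n + 2) + 2 * D, by positivity, fun a w A W ha hw hsup hA hW => ?_⟩
    have h1 := SobolevBound.mul ha.deriv hw hA hW (n + 1) le_rfl
    have h2 := ih a (deriv w) A W ha hw.deriv hsup (hA.mono (Nat.le_succ n)) hW.deriv
    have e : (fun x => iteratedDeriv (n + 1 + 1) (fun x => a x * w x) x -
        a x * iteratedDeriv (n + 1 + 1) w x) = fun x =>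
        iteratedDeriv (n + 1) (fun x => deriv a x * w x) x +
        (iteratedDeriv (n + 1) (fun x => a x * deriv w x) x -
          a x * iteratedDeriv (n + 1) (deriv w) x) := by
      funext x
      rw [iteratedDeriv_succ', iteratedDeriv_succ' (f := w), ha.deriv_mul hw,
        (ha.deriv.mul hw).iteratedDeriv_add (ha.mul hw.deriv)]
      ring
    rw [e]
    refine (energy_add_le ((ha.deriv.mul hw).iteratedDeriv _).continuous
      (((ha.mul hw.deriv).iteratedDeriv _).sub
        (ha.mul (hw.deriv.iteratedDeriv _))).continuous).trans ?_
    linarith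

theorem exists_rpow_sq_le (s : ℝ) : ∃ M : ℝ, 0 ≤ M ∧
    ∀ y ∈ Icc (1 / 2 : ℝ) (3 / 2), (y ^ s) ^ 2 ≤ M := by
  have hc : ContinuousOn (fun y : ℝ => (y ^ s) ^ 2) (Icc (1 / 2) (3 / 2)) :=
    (continuousOn_id.rpow_const fun y hy => Or.inl (by
      have := hy.1
      simp only [id]
      linarith)).pow 2
  obtain ⟨M, hM⟩ := isCompact_Icc.bddAbove_image hc
  exact ⟨M, (sq_nonneg _).trans (hM ⟨1, by norm_num, rfl⟩), fun y hy => hM ⟨y, hy, rfl⟩⟩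

theorem energy_le_of_sq_le (hu : Continuous u) {M : ℝ} (h : ∀ x, u x ^ 2 ≤ M) :
    energy u ≤ 2 * π * M := by
  have := integral_period_mono (hu.pow 2) (continuous_const (y := M)) h
  simpa [energy] using this

/-- Powers of a function with values near `1` inherit Sobolev bounds. -/
theorem exists_sobolevBound_rpow (n : ℕ) (B s : ℝ) : ∃ C : ℝ, ∀ v : ℝ → ℝ, SmoothPeriodic v →
    (∀ x, v x ∈ Icc (1 / 2 : ℝ) (3 / 2)) → SobolevBound (deriv v) n B →
    SobolevBound (fun x => v x ^ s) (n + 1) C := by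
  induction n generalizing s with
  | zero =>
    obtain ⟨M, hM, hMs⟩ := exists_rpow_sq_le s
    obtain ⟨M', hM', hMs'⟩ := exists_rpow_sq_le (s - 1)
    refine ⟨2 * π * M + s ^ 2 * (M' * B), fun v hv hv1 hB => ?_⟩
    have hB0 := hB.nonneg
    have h0 : ∀ x, 0 < v x := fun x => by linarith [(hv1 x).1]
    have hpi := Real.pi_pos
    refine SobolevBound.of_deriv ?_ fun j hj => ?_
    · refine (energy_le_of_sq_le (hv.rpow h0 s).continuous fun x => hMs _ (hv1 x)).trans ?_
      have : 0 ≤ s ^ 2 * (M' * B) := by positivity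
      linarith
    · obtain rfl : j = 0 := by omega
      have e : deriv (fun x => v x ^ s) = fun x => s * (v x ^ (s - 1) * deriv v x) := by
        rw [hv.deriv_rpow h0]
        funext x
        ring
      rw [iteratedDeriv_zero, e, energy_const_mul]
      have h1 := energy_mul_le (hv.rpow h0 (s - 1)).continuous hv.deriv.continuous
        fun x => hMs' _ (hv1 x)
      have h2 := hB 0 le_rfl
      rw [iteratedDeriv_zero] at h2
      have h3 := mul_le_mul_of_nonneg_left
        (h1.trans (mul_le_mul_of_nonneg_left h2 hM')) (sq_nonneg s)
      have : 0 ≤ 2 * π * M := by positivity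
      linarith
  | succ n ih =>
    obtain ⟨M, hM, hMs⟩ := exists_rpow_sq_le s
    obtain ⟨C, hC⟩ := ih (s - 1)
    refine ⟨2 * π * M + s ^ 2 * (4 ^ (n + 2) * C * B), fun v hv hv1 hB => ?_⟩
    have hB0 := hB.nonneg
    have h0 : ∀ x, 0 < v x := fun x => by linarith [(hv1 x).1]
    have hC1 := hC v hv hv1 (hB.mono (Nat.le_succ n))
    have hC0 := hC1.nonneg
    have hpi := Real.pi_pos
    have e : deriv (fun x => v x ^ s) = fun x => s * (v x ^ (s - 1) * deriv v x) := by
      rw [hv.deriv_rpow h0]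
      funext x
      ring
    refine SobolevBound.of_deriv ?_ ?_
    · refine (energy_le_of_sq_le (hv.rpow h0 s).continuous fun x => hMs _ (hv1 x)).trans ?_
      have : 0 ≤ s ^ 2 * (4 ^ (n + 2) * C * B) := by positivity
      linarith
    · rw [e]
      refine (SobolevBound.const_mul ((hv.rpow h0 _).mul hv.deriv)
        (SobolevBound.mul (hv.rpow h0 _) hv.deriv hC1 hB) s).mono_right ?_
      have : 0 ≤ 2 * π * M := by positivity
      linarith

end

/-- The right-hand side of the rescaled curve shortening equation. -/
noncomputable def flowRHS (p : ℝ) (v : ℝ → ℝ) (x : ℝ) : ℝ :=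
  p * v x ^ (1 + 1 / p) * deriv (deriv v) x + p * v x ^ (2 + 1 / p) - p * v x

section

variable {p : ℝ} {v : ℝ → ℝ}

theorem SmoothPeriodic.deriv_reaction (hp : 1 ≤ p) (hv : SmoothPeriodic v) (h0 : ∀ x, 0 < v x) :
    deriv (fun x => p * v x ^ (2 + 1 / p) - p * v x) =
      fun x => ((2 * p + 1) * v x ^ (1 + 1 / p) + -p) * deriv v x := by
  funext x
  have h := (((hv.hasDerivAt x).rpow_const (p := 2 + 1 / p) (Or.inl (h0 x).ne')).const_mul
    p).sub ((hv.hasDerivAt x).const_mul p)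
  have hd := h.deriv
  have e : (2 + 1 / p - 1 : ℝ) = 1 + 1 / p := by ring
  rw [e] at hd
  refine hd.trans ?_
  field_simp
  ring

theorem SmoothPeriodic.deriv_diffusion (hp : 1 ≤ p) (hv : SmoothPeriodic v) (h0 : ∀ x, 0 < v x) :
    deriv (fun x => p * v x ^ (1 + 1 / p)) = fun x => (p + 1) * (v x ^ (1 / p) * deriv v x) := by
  funext x
  have h := ((hv.hasDerivAt x).rpow_const (p := 1 + 1 / p) (Or.inl (h0 x).ne')).const_mul p
  have hd := h.deriv
  have e : (1 + 1 / p - 1 : ℝ) = 1 / p := by ring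
  rw [e] at hd
  refine hd.trans ?_
  field_simp

theorem exists_energy_reaction_le (hp : 1 ≤ p) (n : ℕ) (B : ℝ) : ∃ C : ℝ, ∀ v : ℝ → ℝ,
    SmoothPeriodic v → (∀ x, v x ∈ Icc (1 / 2 : ℝ) (3 / 2)) → SobolevBound (deriv v) n B →
    energy (iteratedDeriv (n + 1) (fun x => p * v x ^ (2 + 1 / p) - p * v x)) ≤
      C * energy (iteratedDeriv (n + 2) v) := by
  obtain ⟨C, hC⟩ := exists_sobolevBound_rpow n B (1 + 1 / p)
  refine ⟨4 ^ (n + 1) * (2 * ((2 * p + 1) ^ 2 * C) + 2 * (2 * π * p ^ 2)),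
    fun v hv hv1 hB => ?_⟩
  have h0 : ∀ x, 0 < v x := fun x => by linarith [(hv1 x).1]
  have hs := hv.rpow h0 (1 + 1 / p)
  have h1 := (hC v hv hv1 hB).const_mul hs (2 * p + 1)
  have h2 : SobolevBound (fun _ : ℝ => -p) (n + 1) (2 * π * p ^ 2) := fun j _ => by
    refine energy_le_of_sq_le ((SmoothPeriodic.const (-p)).iteratedDeriv j).continuous fun x => ?_
    rw [iteratedDeriv_const]
    split_ifs
    · rw [neg_sq]
    · rw [zero_pow two_ne_zero]
      positivity
  have h3 := h1.add (hs.const_mul _) (SmoothPeriodic.const (-p)) h2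
  have h4 : SobolevBound (deriv v) n (energy (iteratedDeriv (n + 2) v)) := fun j hj => by
    rw [← iteratedDeriv_succ']
    exact hv.energy_iteratedDeriv_mono (by omega) (by omega)
  rw [iteratedDeriv_succ', hv.deriv_reaction hp h0]
  exact SobolevBound.mul_of_succ ((hs.const_mul _).add (SmoothPeriodic.const (-p))) hv.deriv
    h3 h4 n le_rfl

theorem energy_diffusion_commutator_le (hp : 1 ≤ p) (hv : SmoothPeriodic v)
    (hv1 : ∀ x, |v x - 1| ≤ 1 / 40) :
    energy (fun x => iteratedDeriv 1 (fun x => p * v x ^ (1 + 1 / p) * deriv (deriv v) x) x -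
      p * v x ^ (1 + 1 / p) * iteratedDeriv 1 (deriv (deriv v)) x) ≤
      p ^ 2 / 16 * energy (iteratedDeriv 3 v) := by
  have h0 : ∀ x, 0 < v x := fun x => by linarith [(abs_le.1 (hv1 x)).1]
  have hs := (hv.rpow h0 (1 + 1 / p)).const_mul p
  have h1 := hv.energy_deriv_mul_deriv_le (by norm_num : (0 : ℝ) < 1 / 40) hv1
  have e3 : iteratedDeriv 3 v = deriv (deriv (deriv v)) := by
    simp only [iteratedDeriv_succ, iteratedDeriv_zero]
  have e : (fun x => iteratedDeriv 1 (fun x => p * v x ^ (1 + 1 / p) * deriv (deriv v) x) x -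
      p * v x ^ (1 + 1 / p) * iteratedDeriv 1 (deriv (deriv v)) x) =
      fun x => ((p + 1) * v x ^ (1 / p)) * (deriv v x * deriv (deriv v) x) := by
    funext x
    rw [iteratedDeriv_one, iteratedDeriv_one, hs.deriv_mul hv.deriv.deriv,
      hv.deriv_diffusion hp h0]
    ring
  rw [e, e3]
  have hsup : ∀ x, ((p + 1) * v x ^ (1 / p)) ^ 2 ≤ 9 * p ^ 2 := fun x => by
    have hx := (abs_le.1 (hv1 x)).2
    have a1 : v x ^ (1 / p) ≤ 3 / 2 := by
      calc v x ^ (1 / p) ≤ (3 / 2 : ℝ) ^ (1 / p) :=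
            Real.rpow_le_rpow (h0 x).le (by linarith) (by positivity)
        _ ≤ (3 / 2 : ℝ) ^ (1 : ℝ) := Real.rpow_le_rpow_of_exponent_le (by norm_num)
            (by rw [div_le_one (by linarith)]; exact hp)
        _ = 3 / 2 := Real.rpow_one _
    have a0 : 0 ≤ v x ^ (1 / p) := Real.rpow_nonneg (h0 x).le _
    have a2 : (p + 1) * v x ^ (1 / p) ≤ 3 * p := by nlinarith
    calc _ ≤ (3 * p) ^ 2 := by gcongr
      _ = 9 * p ^ 2 := by ring
  have h2 := energy_mul_le ((hv.rpow h0 (1 / p)).const_mul (p + 1)).continuous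
    (hv.deriv.mul hv.deriv.deriv).continuous hsup
  have h3 := mul_le_mul_of_nonneg_left h1 (by positivity : 0 ≤ 9 * p ^ 2)
  have h4 := mul_nonneg (sq_nonneg p) (energy_nonneg (deriv (deriv (deriv v))))
  linarith

theorem exists_energy_diffusion_commutator_le (hp : 1 ≤ p) (n : ℕ) (B : ℝ) :
    ∃ C : ℝ, ∀ v : ℝ → ℝ, SmoothPeriodic v → (∀ x, |v x - 1| ≤ 1 / 40) →
    SobolevBound (deriv v) n B →
    energy (fun x => iteratedDeriv (n + 1)
        (fun x => p * v x ^ (1 + 1 / p) * deriv (deriv v) x) x -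
      p * v x ^ (1 + 1 / p) * iteratedDeriv (n + 1) (deriv (deriv v)) x) ≤
      p ^ 2 / 16 * energy (iteratedDeriv (n + 3) v) + C * energy (iteratedDeriv (n + 2) v) := by
  rcases n with _ | n
  · exact ⟨0, fun v hv hv1 _ => by simpa using energy_diffusion_commutator_le hp hv hv1⟩
  obtain ⟨D, hD, hcomm⟩ := exists_energy_commutator_le (n + 1)
  obtain ⟨C, hC⟩ := exists_sobolevBound_rpow (n + 1) B (1 + 1 / p)
  refine ⟨D * (4 * (p ^ 2 * C)), fun v hv hv1 hB => ?_⟩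
  have h0 : ∀ x, 0 < v x := fun x => by linarith [(abs_le.1 (hv1 x)).1]
  have hI : ∀ x, v x ∈ Icc (1 / 2 : ℝ) (3 / 2) := fun x =>
    ⟨by linarith [(abs_le.1 (hv1 x)).1], by linarith [(abs_le.1 (hv1 x)).2]⟩
  have hs := hv.rpow h0 (1 + 1 / p)
  have hS := ((hC v hv hI hB).const_mul hs p).deriv
  have h2 : SobolevBound (deriv (deriv v)) (n + 1) (energy (iteratedDeriv (n + 1 + 2) v)) :=
    fun j hj => by
      rw [← iteratedDeriv_succ', ← iteratedDeriv_succ']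
      exact hv.energy_iteratedDeriv_mono (by omega) (by omega)
  have hA0 := hS.nonneg
  have h3 := hcomm _ _ _ _ (hs.const_mul p) hv.deriv.deriv
    ((hS.mono (Nat.le_add_left 1 n)).sq_le (hs.const_mul p).deriv)
    (hS.mono_right (by linarith)) h2
  have h4 : 0 ≤ p ^ 2 / 16 * energy (iteratedDeriv (n + 1 + 3) v) :=
    mul_nonneg (by positivity) (energy_nonneg _)
  linarith

theorem SmoothPeriodic.flowRHS (p : ℝ) (hv : SmoothPeriodic v) (h0 : ∀ x, 0 < v x) :
    SmoothPeriodic (flowRHS p v) :=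
  ((((hv.rpow h0 _).const_mul p).mul hv.deriv.deriv).add ((hv.rpow h0 _).const_mul p)).sub
    (hv.const_mul p)

/-- The higher-order energy inequality at a fixed time. -/
theorem exists_integral_iteratedDeriv_mul_flowRHS_le (hp : 1 ≤ p) (n : ℕ) (B : ℝ) :
    ∃ C : ℝ, ∀ v : ℝ → ℝ, SmoothPeriodic v → (∀ x, |v x - 1| ≤ 1 / 40) →
    SobolevBound (deriv v) n B →
    ∫ x in (0 : ℝ)..2 * π, iteratedDeriv (n + 2) v x * iteratedDeriv (n + 2) (flowRHS p v) x ≤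
      -(p / 4) * energy (iteratedDeriv (n + 3) v) + C * energy (iteratedDeriv (n + 2) v) := by
  obtain ⟨C₁, hC₁⟩ := exists_energy_diffusion_commutator_le hp n B
  obtain ⟨C₂, hC₂⟩ := exists_energy_reaction_le hp n B
  refine ⟨1 / p * (2 * C₁ + 2 * C₂), fun v hv hv1 hB => ?_⟩
  have hp0 : 0 < p := by linarith
  have h0 : ∀ x, 0 < v x := fun x => by linarith [(abs_le.1 (hv1 x)).1]
  have hI : ∀ x, v x ∈ Icc (1 / 2 : ℝ) (3 / 2) := fun x =>
    ⟨by linarith [(abs_le.1 (hv1 x)).1], by linarith [(abs_le.1 (hv1 x)).2]⟩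
  have h1 := hC₁ v hv hv1 hB
  have h2 := hC₂ v hv hI hB
  have hs := (hv.rpow h0 (1 + 1 / p)).const_mul p
  have hr : SmoothPeriodic (fun x => p * v x ^ (2 + 1 / p) - p * v x) :=
    ((hv.rpow h0 _).const_mul p).sub (hv.const_mul p)
  have hF := hv.flowRHS p h0
  have hw := hv.deriv.deriv
  set a := fun x => p * v x ^ (1 + 1 / p) with ha
  set w := deriv (deriv v) with hw'
  set r := fun x => p * v x ^ (2 + 1 / p) - p * v x with hr'
  set R := fun x => (iteratedDeriv (n + 1) (fun x => a x * w x) x -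
      a x * iteratedDeriv (n + 1) w x) with hR
  set u3 := iteratedDeriv (n + 3) v with hu3
  have ew : iteratedDeriv (n + 1) w = u3 := by
    rw [hw', ← iteratedDeriv_succ', ← iteratedDeriv_succ']
  have c1 : Continuous R := (((hs.mul hw).iteratedDeriv _).sub
    (hs.mul (hw.iteratedDeriv _))).continuous
  have c2 : Continuous (iteratedDeriv (n + 1) r) := (hr.iteratedDeriv _).continuous
  have c3 : Continuous u3 := (hv.iteratedDeriv _).continuous
  have hRr := energy_add_le c1 c2
  have eF : iteratedDeriv (n + 1) (_root_.flowRHS p v) =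
      fun x => a x * u3 x + (R x + iteratedDeriv (n + 1) r x) := by
    have : _root_.flowRHS p v = fun x => a x * w x + r x := by
      funext x
      simp only [_root_.flowRHS, ha, hr', hw']
      ring
    rw [this, (hs.mul hw).iteratedDeriv_add hr]
    funext x
    simp only [hR, ew]
    ring
  have ibp := (hv.iteratedDeriv (n + 2)).integral_mul_deriv (hF.iteratedDeriv (n + 1))
  rw [← iteratedDeriv_succ, ← iteratedDeriv_succ, eF, ← intervalIntegral.integral_neg] at ibp
  rw [ibp]
  have ha34 : ∀ x, 3 / 4 * p ≤ a x := fun x => by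
    have hx := (abs_le.1 (hv1 x)).1
    have h39 : (39 / 40 : ℝ) ^ (2 : ℝ) ≤ v x ^ (1 + 1 / p) :=
      calc (39 / 40 : ℝ) ^ (2 : ℝ) ≤ (39 / 40 : ℝ) ^ (1 + 1 / p) :=
            Real.rpow_le_rpow_of_exponent_ge (by norm_num) (by norm_num) (by
              have : 1 / p ≤ 1 := by rw [div_le_one hp0]; exact hp
              linarith)
        _ ≤ v x ^ (1 + 1 / p) := Real.rpow_le_rpow (by norm_num) (by linarith) (by positivity)
    rw [Real.rpow_two] at h39
    simp only [ha]
    nlinarith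
  have hmain := integral_period_le_linear
    (f := fun x => -(u3 x * (a x * u3 x + (R x + iteratedDeriv (n + 1) r x))))
    (g := fun x => u3 x ^ 2) (h := fun x => (R x + iteratedDeriv (n + 1) r x) ^ 2)
    (by have := hs.continuous; fun_prop) (by fun_prop) (by fun_prop) (-(p / 2)) (1 / p)
    fun x => by
      have q1 := mul_le_mul_of_nonneg_right (ha34 x) (sq_nonneg (u3 x))
      have q2 : 0 ≤ p / 4 * (u3 x + 2 / p * (R x + iteratedDeriv (n + 1) r x)) ^ 2 := by
        positivity
      have q3 : p / 4 * (u3 x + 2 / p * (R x + iteratedDeriv (n + 1) r x)) ^ 2 =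
          p / 4 * u3 x ^ 2 + u3 x * (R x + iteratedDeriv (n + 1) r x) +
            1 / p * (R x + iteratedDeriv (n + 1) r x) ^ 2 := by
        field_simp
        ring
      nlinarith
  refine hmain.trans ?_
  change -(p / 2) * energy u3 +
    1 / p * energy (fun x => R x + iteratedDeriv (n + 1) r x) ≤ _
  have h5 : energy (fun x => R x + iteratedDeriv (n + 1) r x) ≤
      p ^ 2 / 8 * energy u3 + (2 * C₁ + 2 * C₂) * energy (iteratedDeriv (n + 2) v) := by
    linarith
  have h6 := mul_le_mul_of_nonneg_left h5 (by positivity : 0 ≤ 1 / p)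
  have h7 : 1 / p * (p ^ 2 / 8 * energy u3 +
      (2 * C₁ + 2 * C₂) * energy (iteratedDeriv (n + 2) v)) = p / 8 * energy u3 +
      1 / p * (2 * C₁ + 2 * C₂) * energy (iteratedDeriv (n + 2) v) := by
    field_simp
  have h8 := mul_nonneg hp0.le (energy_nonneg u3)
  linarith

/-- The linearized decay rate: an energy inequality for the first derivative. -/
theorem exists_integral_deriv_mul_flowRHS_le (hp : 1 ≤ p) {α : ℝ} (hα : 0 < α) (hα1 : α < 1) :
    ∃ δ : ℝ, 0 < δ ∧ ∀ v : ℝ → ℝ, SmoothPeriodic v → (∀ x, |v x - 1| < δ) → (∀ x, 0 < v x) →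
    ∫ x in (0 : ℝ)..2 * π, v x ^ (-1 / p) * Real.cos x = 0 →
    ∫ x in (0 : ℝ)..2 * π, v x ^ (-1 / p) * Real.sin x = 0 →
    ∫ x in (0 : ℝ)..2 * π, deriv v x * deriv (flowRHS p v) x ≤
      -(2 * α * p) * energy (deriv v) := by
  have hp0 : 0 < p := by linarith
  obtain ⟨ε, hε, hε1, hεα⟩ : ∃ ε : ℝ, 0 < ε ∧ ε ≤ 1 ∧ 11 * ε ≤ 2 * (1 - α) :=
    ⟨(1 - α) / 11, by linarith, by linarith, by linarith⟩
  have hc (s : ℝ) : Tendsto (fun y : ℝ => y ^ s) (nhds 1) (nhds 1) := by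
    have := (Real.continuousAt_rpow_const 1 s (Or.inl one_ne_zero)).tendsto
    rwa [Real.one_rpow] at this
  have ev : ∀ᶠ y : ℝ in nhds 1, (p - ε ≤ p * y ^ (1 + 1 / p) ∧
      (2 * p + 1) * y ^ (1 + 1 / p) + -p ≤ p + 1 + ε) ∧ (1 - y ^ (-1 / p - 1)) ^ 2 ≤ ε ^ 2 := by
    have t1 := (hc (1 + 1 / p)).const_mul p
    have t2 := ((hc (1 + 1 / p)).const_mul (2 * p + 1)).add_const (-p)
    have t3 := ((hc (-1 / p - 1)).const_sub 1).pow 2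
    refine ((t1.eventually (eventually_ge_nhds ?_)).and
      (t2.eventually (eventually_le_nhds ?_))).and (t3.eventually (eventually_le_nhds ?_))
    · linarith
    · linarith
    · rw [sub_self, zero_pow two_ne_zero]
      positivity
  obtain ⟨δ, hδ, hball⟩ := Metric.eventually_nhds_iff.1 ev
  refine ⟨δ, hδ, fun v hv hvδ h0 hcos hsin => ?_⟩
  have hev := fun x => hball (y := v x) (by rw [Real.dist_eq]; exact hvδ x)
  have hF := hv.flowRHS p h0
  have hs := (hv.rpow h0 (1 + 1 / p)).const_mul p
  have hr : SmoothPeriodic (fun x => p * v x ^ (2 + 1 / p) - p * v x) :=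
    ((hv.rpow h0 _).const_mul p).sub (hv.const_mul p)
  have hg := ((hv.rpow h0 (1 + 1 / p)).const_mul (2 * p + 1)).add (SmoothPeriodic.const (-p))
  have cs := hs.continuous
  have cr := hr.continuous
  have cg := hg.continuous
  have c1 := hv.deriv.continuous
  have c2 := hv.deriv.deriv.continuous
  have hpi := Real.pi_pos
  set u1 := deriv v with hu1
  set u2 := deriv u1 with hu2
  -- the energy identity
  have hid : ∫ x in (0 : ℝ)..2 * π, u1 x * deriv (_root_.flowRHS p v) x =
      ∫ x in (0 : ℝ)..2 * π, (-(p * v x ^ (1 + 1 / p) * u2 x ^ 2) +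
        ((2 * p + 1) * v x ^ (1 + 1 / p) + -p) * u1 x ^ 2) := by
    have i1 := hv.deriv.integral_mul_deriv hF
    have i2 := hv.deriv.integral_mul_deriv hr
    rw [hv.deriv_reaction hp h0] at i2
    have i3 : ∫ x in (0 : ℝ)..2 * π, u2 x * _root_.flowRHS p v x =
        1 * (∫ x in (0 : ℝ)..2 * π, p * v x ^ (1 + 1 / p) * u2 x ^ 2) +
        1 * ∫ x in (0 : ℝ)..2 * π, u2 x * (p * v x ^ (2 + 1 / p) - p * v x) := by
      rw [← integral_period_linear (by fun_prop) (by fun_prop)]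
      refine intervalIntegral.integral_congr fun x _ => ?_
      simp only [_root_.flowRHS, ← hu1, ← hu2]
      ring
    have i4 : ∫ x in (0 : ℝ)..2 * π, (-(p * v x ^ (1 + 1 / p) * u2 x ^ 2) +
        ((2 * p + 1) * v x ^ (1 + 1 / p) + -p) * u1 x ^ 2) =
        -1 * (∫ x in (0 : ℝ)..2 * π, p * v x ^ (1 + 1 / p) * u2 x ^ 2) +
        1 * ∫ x in (0 : ℝ)..2 * π, u1 x * (((2 * p + 1) * v x ^ (1 + 1 / p) + -p) * u1 x) := by
      rw [← integral_period_linear (by fun_prop) (by fun_prop)]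
      exact intervalIntegral.integral_congr fun x _ => by ring
    rw [i4, i2, i1, i3]
    ring
  have hle := integral_period_le_linear
    (f := fun x => (-(p * v x ^ (1 + 1 / p) * u2 x ^ 2) +
        ((2 * p + 1) * v x ^ (1 + 1 / p) + -p) * u1 x ^ 2))
    (g := fun x => u2 x ^ 2) (h := fun x => u1 x ^ 2) (by fun_prop) (by fun_prop) (by fun_prop)
    (-(p - ε)) (p + 1 + ε) fun x => by
      have q1 := mul_le_mul_of_nonneg_right (hev x).1.1 (sq_nonneg (u2 x))
      have q2 := mul_le_mul_of_nonneg_right (hev x).1.2 (sq_nonneg (u1 x))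
      linarith
  rw [← hid] at hle
  change _ ≤ -(p - ε) * energy u2 + (p + 1 + ε) * energy u1 at hle
  -- near-orthogonality to the first harmonics
  have horth : ∀ e e' : ℝ → ℝ, SmoothPeriodic e → SmoothPeriodic e' → deriv e = e' →
      energy e ≤ π →
      ∫ x in (0 : ℝ)..2 * π, v x ^ (-1 / p) * e' x = 0 →
      (∫ x in (0 : ℝ)..2 * π, u1 x * e x) ^ 2 ≤ ε ^ 2 * π * energy u1 := by
    intro e e' he he' hee' hepi hzero
    have j1 := (hv.rpow h0 (-1 / p)).integral_mul_deriv he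
    rw [hee', hzero, hv.deriv_rpow h0] at j1
    have cpow := (hv.rpow h0 (-1 / p - 1)).continuous
    have ce := he.continuous
    have j2 : ∫ x in (0 : ℝ)..2 * π, u1 x * e x =
        ∫ x in (0 : ℝ)..2 * π, (1 - v x ^ (-1 / p - 1)) * u1 x * e x := by
      have k1 : ∫ x in (0 : ℝ)..2 * π, v x ^ (-1 / p - 1) * u1 x * e x = 0 := by
        have k2 : ∫ x in (0 : ℝ)..2 * π, -1 / p * v x ^ (-1 / p - 1) * u1 x * e x =
            -1 / p * ∫ x in (0 : ℝ)..2 * π, v x ^ (-1 / p - 1) * u1 x * e x := by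
          rw [← intervalIntegral.integral_const_mul]
          exact intervalIntegral.integral_congr fun x _ => by ring
        rw [k2] at j1
        have : (-1 / p) ≠ 0 := by
          rw [neg_div]
          exact (neg_lt_zero.2 (by positivity)).ne
        have k3 : -1 / p * ∫ x in (0 : ℝ)..2 * π, v x ^ (-1 / p - 1) * u1 x * e x = 0 := by
          linarith
        exact (mul_eq_zero.1 k3).resolve_left this
      have k4 := integral_period_linear (g := fun x => u1 x * e x)
        (h := fun x => v x ^ (-1 / p - 1) * u1 x * e x) (by fun_prop) (by fun_prop) 1 (-1)
      rw [k1] at k4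
      have k5 : ∫ x in (0 : ℝ)..2 * π, (1 - v x ^ (-1 / p - 1)) * u1 x * e x =
          ∫ x in (0 : ℝ)..2 * π,
            (1 * (u1 x * e x) + -1 * (v x ^ (-1 / p - 1) * u1 x * e x)) :=
        intervalIntegral.integral_congr fun x _ => by ring
      rw [k5, k4]
      ring
    rw [j2]
    -- Cauchy–Schwarz through a discriminant
    set P := ∫ x in (0 : ℝ)..2 * π, (1 - v x ^ (-1 / p - 1)) * u1 x * e x with hP
    have hq : ∀ t : ℝ, t * P ≤ 1 * (ε ^ 2 * energy u1) + t ^ 2 / 4 * energy e := fun t => by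
      have := integral_period_le_linear
        (f := fun x => t * ((1 - v x ^ (-1 / p - 1)) * u1 x * e x))
        (g := fun x => ε ^ 2 * u1 x ^ 2) (h := fun x => e x ^ 2)
        (by fun_prop) (by fun_prop) (by fun_prop) 1 (t ^ 2 / 4) fun x => by
          have q1 := mul_le_mul_of_nonneg_right (hev x).2 (sq_nonneg (u1 x))
          nlinarith [sq_nonneg ((1 - v x ^ (-1 / p - 1)) * u1 x - t / 2 * e x)]
      rwa [intervalIntegral.integral_const_mul, intervalIntegral.integral_const_mul] at this
    have hq2 := hq (2 / π * P)
    have hq3 : (2 / π * P) ^ 2 / 4 * energy e ≤ (2 / π * P) ^ 2 / 4 * π := by gcongr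
    have hq4 : (2 / π * P) ^ 2 / 4 * π = P ^ 2 / π := by field_simp; ring
    have hq5 : 2 / π * P * P = P ^ 2 / π + P ^ 2 / π := by ring
    have hq6 : P ^ 2 / π ≤ ε ^ 2 * energy u1 := by linarith
    rw [div_le_iff₀ hpi] at hq6
    linarith
  have ec : energy Real.cos ≤ π := by
    simp [energy, integral_cos_sq]
  have es : energy Real.sin ≤ π := by
    simp [energy, integral_sin_sq]
  have o1 := horth Real.sin Real.cos SmoothPeriodic.sin SmoothPeriodic.cos Real.deriv_sin
    es hcos
  have o2 := horth Real.cos (fun x => -1 * Real.sin x) SmoothPeriodic.cos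
    (SmoothPeriodic.sin.const_mul (-1)) (by funext x; simp) ec (by
      have : ∫ x in (0 : ℝ)..2 * π, v x ^ (-1 / p) * (-1 * Real.sin x) =
          -1 * ∫ x in (0 : ℝ)..2 * π, v x ^ (-1 / p) * Real.sin x := by
        rw [← intervalIntegral.integral_const_mul]
        exact intervalIntegral.integral_congr fun x _ => by ring
      rw [this, hsin, mul_zero])
  have hW := hv.deriv.four_mul_energy_le hv.integral_deriv
  have hN := energy_nonneg u1
  have hW2 : (4 - 6 * ε ^ 2) * energy u1 ≤ energy u2 := by
    have h3 : 3 / π * ((∫ x in (0 : ℝ)..2 * π, u1 x * Real.cos x) ^ 2 +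
        (∫ x in (0 : ℝ)..2 * π, u1 x * Real.sin x) ^ 2) ≤
        3 / π * (2 * (ε ^ 2 * π * energy u1)) := by
      gcongr
      linarith
    have h4 : 3 / π * (2 * (ε ^ 2 * π * energy u1)) = 6 * ε ^ 2 * energy u1 := by
      field_simp
      ring
    linarith
  have h5 := mul_le_mul_of_nonneg_left hW2 (by linarith : 0 ≤ p - ε)
  have h6 : -((p - ε) * (4 - 6 * ε ^ 2)) + (p + 1 + ε) ≤ -(2 * α * p) := by
    have e2 : ε ^ 2 ≤ ε := by nlinarith
    have : 6 * (p * ε ^ 2) ≤ 6 * (p * ε) := by gcongr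
    have : 5 * ε ≤ 5 * (p * ε) := by nlinarith
    have : p * (11 * ε) ≤ p * (2 * (1 - α)) := by gcongr
    have : 0 ≤ ε ^ 3 := by positivity
    nlinarith
  have h7 := mul_le_mul_of_nonneg_right h6 hN
  linarith

end

/-- Functions of an angle and a time that are smooth up to the initial time. -/
def SmoothOnHalfPlane (F : ℝ → ℝ → ℝ) : Prop :=
  ContDiffOn ℝ (⊤ : ℕ∞) (fun q : ℝ × ℝ => F q.1 q.2) (univ ×ˢ Ici 0)

namespace SmoothOnHalfPlane

variable {F G : ℝ → ℝ → ℝ}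

theorem contDiff_slice (hF : SmoothOnHalfPlane F) {s : ℝ} (hs : 0 ≤ s) :
    ContDiff ℝ (⊤ : ℕ∞) (fun x => F x s) := by
  have h : ContDiff ℝ (⊤ : ℕ∞) (fun x : ℝ => (x, s)) := contDiff_id.prodMk contDiff_const
  exact contDiffOn_univ.1 (hF.comp h.contDiffOn fun x _ => ⟨mem_univ _, hs⟩)

protected theorem contDiffAt (hF : SmoothOnHalfPlane F) (x : ℝ) {s : ℝ} (hs : 0 < s) :
    ContDiffAt ℝ (⊤ : ℕ∞) (fun q : ℝ × ℝ => F q.1 q.2) (x, s) :=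
  ContDiffOn.contDiffAt hF (prod_mem_nhds univ_mem (Ici_mem_nhds hs))

theorem hasDerivAt_left (hF : SmoothOnHalfPlane F) {x s : ℝ} (hs : 0 < s) :
    HasDerivAt (fun y => F y s) (fderiv ℝ (fun q : ℝ × ℝ => F q.1 q.2) (x, s) (1, 0)) x := by
  have h := ((hF.contDiffAt x hs).differentiableAt (by simp)).hasFDerivAt
  exact h.comp_hasDerivAt x ((hasDerivAt_id x).prodMk (hasDerivAt_const x s))

theorem hasDerivAt_right (hF : SmoothOnHalfPlane F) {x s : ℝ} (hs : 0 < s) :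
    HasDerivAt (fun r => F x r) (fderiv ℝ (fun q : ℝ × ℝ => F q.1 q.2) (x, s) (0, 1)) s := by
  have h := ((hF.contDiffAt x hs).differentiableAt (by simp)).hasFDerivAt
  exact h.comp_hasDerivAt s ((hasDerivAt_const s x).prodMk (hasDerivAt_id s))

protected theorem deriv (hF : SmoothOnHalfPlane F) :
    SmoothOnHalfPlane (fun x s => deriv (fun y => F y s) x) := by
  have hS : UniqueDiffOn ℝ ((univ : Set ℝ) ×ˢ Ici (0 : ℝ)) :=
    uniqueDiffOn_univ.prod (uniqueDiffOn_Ici 0)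
  have h1 : ContDiffOn ℝ (⊤ : ℕ∞)
      (fun q => fderivWithin ℝ (fun q : ℝ × ℝ => F q.1 q.2) (univ ×ˢ Ici 0) q (1, 0))
      (univ ×ˢ Ici 0) :=
    (hF.fderivWithin hS (by simp)).clm_apply contDiffOn_const
  refine h1.congr fun q hq => ?_
  have h2 := (hF.differentiableOn (by simp) q hq).hasFDerivWithinAt
  have h3 : HasDerivWithinAt (fun y : ℝ => (y, q.2)) (1, 0) univ q.1 :=
    ((hasDerivAt_id q.1).prodMk (hasDerivAt_const q.1 q.2)).hasDerivWithinAt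
  have h4 := h2.comp_hasDerivWithinAt q.1 h3
    (show MapsTo (fun y : ℝ => (y, q.2)) univ (univ ×ˢ Ici (0 : ℝ)) from
      fun y _ => ⟨mem_univ _, hq.2⟩)
  exact (hasDerivWithinAt_univ.1 h4).deriv

protected theorem iteratedDeriv (hF : SmoothOnHalfPlane F) (l : ℕ) :
    SmoothOnHalfPlane (fun x s => iteratedDeriv l (fun y => F y s) x) := by
  induction l with
  | zero => simpa using hF
  | succ l ih => simpa only [iteratedDeriv_succ] using ih.deriv

theorem hasDerivAt_deriv (hF : SmoothOnHalfPlane F) (x : ℝ) {s : ℝ} (hs : 0 < s) :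
    deriv (fun r => deriv (fun y => F y r) x) s = deriv (fun y => deriv (fun r => F y r) s) x := by
  set f : ℝ × ℝ → ℝ := fun q => F q.1 q.2 with hf
  have hc := hF.contDiffAt x hs
  have h1 : DifferentiableAt ℝ (fderiv ℝ f) (x, s) :=
    (hc.fderiv_right (m := 1) (by norm_cast)).differentiableAt (by simp)
  have hsymm : IsSymmSndFDerivAt ℝ f (x, s) := hc.isSymmSndFDerivAt (by
    simp only [minSmoothness_of_isRCLikeNormedField]
    exact WithTop.coe_le_coe.2 (le_top : (2 : ℕ∞) ≤ ⊤))
  have h2 : HasDerivAt (fun r => fderiv ℝ f (x, r) (1, 0))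
      (fderiv ℝ (fderiv ℝ f) (x, s) (0, 1) (1, 0)) s := by
    have := h1.hasFDerivAt.comp_hasDerivAt s ((hasDerivAt_const s x).prodMk (hasDerivAt_id s))
    simpa using this.clm_apply (hasDerivAt_const s ((1 : ℝ), (0 : ℝ)))
  have h3 : HasDerivAt (fun y => fderiv ℝ f (y, s) (0, 1))
      (fderiv ℝ (fderiv ℝ f) (x, s) (1, 0) (0, 1)) x := by
    have := h1.hasFDerivAt.comp_hasDerivAt x ((hasDerivAt_id x).prodMk (hasDerivAt_const x s))
    simpa using this.clm_apply (hasDerivAt_const x ((0 : ℝ), (1 : ℝ)))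
  have e1 : (fun r => deriv (fun y => F y r) x) =ᶠ[nhds s] fun r => fderiv ℝ f (x, r) (1, 0) := by
    filter_upwards [Ioi_mem_nhds hs] with r hr using (hF.hasDerivAt_left hr).deriv
  have e2 : (fun y => deriv (fun r => F y r) s) = fun y => fderiv ℝ f (y, s) (0, 1) :=
    funext fun y => (hF.hasDerivAt_right hs).deriv
  rw [e1.deriv_eq, e2, h2.deriv, h3.deriv]
  exact hsymm _ _

theorem hasDerivAt_iteratedDeriv (hF : SmoothOnHalfPlane F) (l : ℕ) (x : ℝ) {s : ℝ} (hs : 0 < s) :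
    HasDerivAt (fun r => iteratedDeriv l (fun y => F y r) x)
      (iteratedDeriv l (fun y => deriv (fun r => F y r) s) x) s := by
  induction l generalizing F with
  | zero =>
    simp only [iteratedDeriv_zero]
    exact (hF.hasDerivAt_right hs).differentiableAt.hasDerivAt
  | succ l ih =>
    have h := ih hF.deriv
    simp only [iteratedDeriv_succ']
    have e : (fun y => deriv (fun r => deriv (fun y => F y r) y) s) =
        deriv (fun y => deriv (fun r => F y r) s) := funext fun y => hF.hasDerivAt_deriv y hs
    rwa [e] at h

theorem hasDerivAt_integral (hF : SmoothOnHalfPlane F) {s : ℝ} (hs : 0 < s) :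
    HasDerivAt (fun r => ∫ x in (0 : ℝ)..2 * π, F x r)
      (∫ x in (0 : ℝ)..2 * π, deriv (fun r => F x r) s) s := by
  set f : ℝ × ℝ → ℝ := fun q => F q.1 q.2 with hf
  have hcont : ContinuousOn (fun q => fderiv ℝ f q (0, 1)) (univ ×ˢ Ioi (0 : ℝ)) := fun q hq =>
    (((hF.contDiffAt q.1 hq.2).fderiv_right (m := 1) (by norm_cast)).continuousAt.clm_apply
      continuousAt_const).continuousWithinAt
  have hsub : Icc (0 : ℝ) (2 * π) ×ˢ Icc (s / 2) (2 * s) ⊆ univ ×ˢ Ioi (0 : ℝ) :=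
    prod_mono (subset_univ _) fun r hr => lt_of_lt_of_le (by linarith) hr.1
  obtain ⟨M, hM⟩ := (isCompact_Icc.prod isCompact_Icc).exists_bound_of_continuousOn
    (hcont.mono hsub)
  have hnhds : Icc (s / 2) (2 * s) ∈ nhds s := Icc_mem_nhds (by linarith) (by linarith)
  have e : ∀ r : ℝ, 0 < r →
      (fun x => deriv (fun r => F x r) r) = fun x => fderiv ℝ f (x, r) (0, 1) :=
    fun r hr => funext fun x => (hF.hasDerivAt_right hr).deriv
  refine (intervalIntegral.hasDerivAt_integral_of_dominated_loc_of_deriv_le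
    (F := fun r x => F x r) (F' := fun r x => deriv (fun r => F x r) r) (bound := fun _ => M)
    hnhds ?_ ?_ ?_ ?_ ?_ ?_).2
  · filter_upwards [Ioi_mem_nhds hs] with r hr
    exact (hF.contDiff_slice (le_of_lt hr)).continuous.aestronglyMeasurable
  · exact (hF.contDiff_slice hs.le).continuous.intervalIntegrable _ _
  · rw [e s hs]
    have : Continuous fun x => fderiv ℝ f (x, s) (0, 1) :=
      hcont.comp_continuous (by fun_prop : Continuous fun x : ℝ => (x, s)) fun x => ⟨mem_univ _, hs⟩
    exact this.aestronglyMeasurable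
  · refine Eventually.of_forall fun x hx r hr => ?_
    rw [uIoc_of_le (by positivity)] at hx
    have hr0 : 0 < r := lt_of_lt_of_le (by linarith) hr.1
    rw [(hF.hasDerivAt_right hr0).deriv]
    exact hM (x, r) ⟨Ioc_subset_Icc_self hx, hr⟩
  · exact intervalIntegrable_const
  · refine Eventually.of_forall fun x hx r hr => ?_
    have hr0 : 0 < r := lt_of_lt_of_le (by linarith) hr.1
    exact (hF.hasDerivAt_right hr0).differentiableAt.hasDerivAt

theorem exists_abs_le (hF : SmoothOnHalfPlane F)
    (hper : ∀ s, 0 ≤ s → Function.Periodic (fun x => F x s) (2 * π)) (T : ℝ) :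
    ∃ M : ℝ, ∀ x, ∀ s ∈ Icc 0 T, |F x s| ≤ M := by
  have hsub : Icc (0 : ℝ) (2 * π) ×ˢ Icc 0 T ⊆ univ ×ˢ Ici (0 : ℝ) :=
    prod_mono (subset_univ _) fun r hr => hr.1
  obtain ⟨M, hM⟩ := (isCompact_Icc.prod isCompact_Icc).exists_bound_of_continuousOn
    (hF.continuousOn.mono hsub)
  refine ⟨M, fun x s hs => ?_⟩
  obtain ⟨y, hy, hxy⟩ := (hper s hs.1).exists_mem_Ico₀ (by positivity) x
  have h := hM (y, s) ⟨Ico_subset_Icc_self hy, hs⟩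
  have hxy' : F x s = F y s := hxy
  rw [hxy']
  exact h

end SmoothOnHalfPlane

theorem exists_le_exp_of_hasDerivAt_le {y y' : ℝ → ℝ} {A b C T : ℝ} (hT : 0 ≤ T) (hbA : b < A)
    (hC : 0 ≤ C) (hy : ∀ s, T ≤ s → HasDerivAt y (y' s) s)
    (hle : ∀ s, T ≤ s → y' s ≤ -A * y s + C * Real.exp (-b * s)) :
    ∃ D : ℝ, 0 ≤ D ∧ ∀ s, T ≤ s → y s ≤ D * Real.exp (-b * s) := by
  set c := C / (A - b) with hc
  have hAb : 0 < A - b := sub_pos.2 hbA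
  set z := fun s => y s * Real.exp (A * s) - c * Real.exp ((A - b) * s) with hz
  have hexp (a s : ℝ) : HasDerivAt (fun s => Real.exp (a * s)) (Real.exp (a * s) * a) s := by
    simpa using ((hasDerivAt_id s).const_mul a).exp
  have hdz : ∀ s, T ≤ s → HasDerivAt z (y' s * Real.exp (A * s) + y s * (Real.exp (A * s) * A) -
      c * (Real.exp ((A - b) * s) * (A - b))) s := fun s hs =>
    ((hy s hs).mul (hexp A s)).sub ((hexp (A - b) s).const_mul c)
  have hanti : AntitoneOn z (Ici T) := by
    refine antitoneOn_of_hasDerivWithinAt_nonpos (convex_Ici T)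
      (fun s hs => (hdz s hs).continuousAt.continuousWithinAt)
      (fun s hs => (hdz s (interior_subset hs)).hasDerivWithinAt) fun s hs => ?_
    have h1 := mul_le_mul_of_nonneg_right (hle s (interior_subset hs)) (Real.exp_pos (A * s)).le
    have h2 : Real.exp ((A - b) * s) = Real.exp (-b * s) * Real.exp (A * s) := by
      rw [← Real.exp_add]
      ring_nf
    have h3 : c * (Real.exp ((A - b) * s) * (A - b)) =
        C * Real.exp (-b * s) * Real.exp (A * s) := by
      rw [h2, hc]
      field_simp
    linarith
  refine ⟨|z T| + c, by positivity, fun s hs => ?_⟩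
  have h1 : z s ≤ |z T| := (hanti self_mem_Ici hs hs).trans (le_abs_self _)
  have h2 : Real.exp ((A - b) * s) * Real.exp (-A * s) = Real.exp (-b * s) := by
    rw [← Real.exp_add]
    ring_nf
  have h3 : Real.exp (A * s) * Real.exp (-A * s) = 1 := by
    rw [← Real.exp_add]
    ring_nf
    exact Real.exp_zero
  have h4 : Real.exp (-A * s) ≤ Real.exp (-b * s) :=
    Real.exp_le_exp.2 (by nlinarith)
  calc y s = z s * Real.exp (-A * s) + c * Real.exp (-b * s) := by
        simp only [hz]
        rw [sub_mul, mul_assoc, h3, mul_assoc, h2]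
        ring
    _ ≤ |z T| * Real.exp (-b * s) + c * Real.exp (-b * s) := by
        gcongr
    _ = (|z T| + c) * Real.exp (-b * s) := by ring

/-- Smooth positive periodic solutions of the rescaled curve shortening equation. -/
structure IsNormalizedFlow (p : ℝ) (K : ℝ → ℝ → ℝ) : Prop where
  smooth : SmoothOnHalfPlane K
  periodic : ∀ s, Function.Periodic (fun x => K x s) (2 * π)
  pos : ∀ x s, 0 ≤ s → 0 < K x s
  deriv_eq : ∀ x s, 0 < s → deriv (fun r => K x r) s = flowRHS p (fun y => K y s) x

namespace IsNormalizedFlow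

variable {p : ℝ} {K : ℝ → ℝ → ℝ}

theorem smoothPeriodic (hK : IsNormalizedFlow p K) {s : ℝ} (hs : 0 ≤ s) :
    SmoothPeriodic (fun x => K x s) :=
  ⟨hK.smooth.contDiff_slice hs, hK.periodic s⟩

theorem hasDerivAt_energy (hK : IsNormalizedFlow p K) (l : ℕ) {s : ℝ} (hs : 0 < s) :
    HasDerivAt (fun r => energy (iteratedDeriv l (fun x => K x r)))
      (2 * ∫ x in (0 : ℝ)..2 * π, iteratedDeriv l (fun x => K x s) x *
        iteratedDeriv l (flowRHS p (fun x => K x s)) x) s := by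
  have hG : SmoothOnHalfPlane (fun x r => iteratedDeriv l (fun y => K y r) x ^ 2) :=
    ContDiffOn.pow (hK.smooth.iteratedDeriv l) 2
  have h := hG.hasDerivAt_integral hs
  have e : (fun y => deriv (fun r => K y r) s) = flowRHS p (fun x => K x s) :=
    funext fun y => hK.deriv_eq y s hs
  rw [← intervalIntegral.integral_const_mul]
  refine h.congr_deriv (intervalIntegral.integral_congr fun x _ => ?_)
  have h2 := (hK.smooth.hasDerivAt_iteratedDeriv l x hs).pow 2
  rw [e] at h2
  refine h2.deriv.trans ?_
  simp only [Nat.cast_ofNat, Nat.add_one_sub_one, pow_one]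
  ring

theorem hasDerivAt_integral_rpow_mul (hK : IsNormalizedFlow p K) (hp : 1 ≤ p) {e : ℝ → ℝ}
    (he : SmoothPeriodic e) (hee : deriv (deriv e) = fun x => -e x) {s : ℝ} (hs : 0 < s) :
    HasDerivAt (fun r => ∫ x in (0 : ℝ)..2 * π, K x r ^ (-1 / p) * e x)
      (∫ x in (0 : ℝ)..2 * π, K x s ^ (-1 / p) * e x) s := by
  have hG : SmoothOnHalfPlane (fun x r => K x r ^ (-1 / p) * e x) :=
    ContDiffOn.mul (ContDiffOn.rpow_const_of_ne hK.smooth fun q hq => (hK.pos q.1 q.2 hq.2).ne')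
      (he.1.comp contDiff_fst).contDiffOn
  refine (hG.hasDerivAt_integral hs).congr_deriv ?_
  have hv := hK.smoothPeriodic hs.le
  have h0 : ∀ x, 0 < K x s := fun x => hK.pos x s hs.le
  set v := fun x => K x s with hv'
  have cv := hv.continuous
  have c2 := hv.deriv.deriv.continuous
  have ce := he.continuous
  have cr := (hv.rpow h0 (-1 / p)).continuous
  have e1 : ∀ x, deriv (fun r => K x r ^ (-1 / p) * e x) s =
      1 * (v x ^ (-1 / p) * e x) + -1 * (e x * deriv (deriv v) x + v x * e x) := fun x => by
    have h1 := (hK.smooth.hasDerivAt_right (x := x) hs).differentiableAt.hasDerivAt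
    rw [hK.deriv_eq x s hs] at h1
    refine ((h1.rpow_const (p := -1 / p) (Or.inl (h0 x).ne')).mul_const (e x)).deriv.trans ?_
    have a1 : v x ^ (1 + 1 / p) * v x ^ (-1 / p - 1) = 1 := by
      rw [← Real.rpow_add (h0 x)]
      ring_nf
      exact Real.rpow_zero _
    have a2 : v x ^ (2 + 1 / p) * v x ^ (-1 / p - 1) = v x := by
      rw [← Real.rpow_add (h0 x)]
      ring_nf
      exact Real.rpow_one _
    have a3 : v x * v x ^ (-1 / p - 1) = v x ^ (-1 / p) := by
      nth_rewrite 1 [← Real.rpow_one (v x)]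
      rw [← Real.rpow_add (h0 x), add_sub_cancel]
    have hp0 : p * (-1 / p) = -1 := by field_simp
    have a4 : flowRHS p v x * (-1 / p) * v x ^ (-1 / p - 1) =
        p * (-1 / p) * ((v x ^ (1 + 1 / p) * v x ^ (-1 / p - 1)) * deriv (deriv v) x +
          v x ^ (2 + 1 / p) * v x ^ (-1 / p - 1) - v x * v x ^ (-1 / p - 1)) := by
      simp only [flowRHS]
      ring
    rw [hp0, a1, a2, a3] at a4
    change flowRHS p v x * (-1 / p) * v x ^ (-1 / p - 1) * e x = _
    rw [a4]
    ring
  rw [intervalIntegral.integral_congr (g := fun x => 1 * (v x ^ (-1 / p) * e x) +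
    -1 * (e x * deriv (deriv v) x + v x * e x)) fun x _ => e1 x,
    integral_period_linear (by fun_prop) (by fun_prop)]
  have i1 := he.integral_mul_deriv hv.deriv
  have i2 := hv.integral_mul_deriv he.deriv
  rw [hee] at i2
  have i3 : ∫ x in (0 : ℝ)..2 * π, v x * -e x = -1 * ∫ x in (0 : ℝ)..2 * π, v x * e x := by
    rw [← intervalIntegral.integral_const_mul]
    exact intervalIntegral.integral_congr fun x _ => by ring
  have i4 : ∫ x in (0 : ℝ)..2 * π, deriv e x * deriv v x =
      ∫ x in (0 : ℝ)..2 * π, deriv v x * deriv e x :=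
    intervalIntegral.integral_congr fun x _ => by ring
  have i5 := integral_period_linear (g := fun x => e x * deriv (deriv v) x)
    (h := fun x => v x * e x) (by fun_prop) (by fun_prop) 1 1
  simp only [one_mul] at i5
  rw [i5]
  linarith

theorem integral_rpow_mul_eq_zero (hK : IsNormalizedFlow p K) (hp : 1 ≤ p)
    (hconv : TendstoUniformly (fun s x => K x s) (fun _ => 1) atTop) {e : ℝ → ℝ}
    (he : SmoothPeriodic e) (hee : deriv (deriv e) = fun x => -e x) (he1 : ∀ x, |e x| ≤ 1)
    {s : ℝ} (hs : 0 < s) : ∫ x in (0 : ℝ)..2 * π, K x s ^ (-1 / p) * e x = 0 := by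
  set M := fun r => ∫ x in (0 : ℝ)..2 * π, K x r ^ (-1 / p) * e x with hM
  have hd : ∀ r, 0 < r → HasDerivAt (fun r => M r * Real.exp (-r)) 0 r := fun r hr => by
    have h := (hK.hasDerivAt_integral_rpow_mul hp he hee hr).mul (hasDerivAt_id r).neg.exp
    refine h.congr_deriv ?_
    simp
  have hconst : ∀ r, s ≤ r → M r * Real.exp (-r) = M s * Real.exp (-s) := fun r hr =>
    constant_of_has_deriv_right_zero
      (fun t ht => (hd t (hs.trans_le ht.1)).continuousAt.continuousWithinAt)
      (fun t ht => (hd t (hs.trans_le ht.1)).hasDerivWithinAt) r ⟨hr, le_rfl⟩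
  obtain ⟨B, hB0, hB⟩ := exists_rpow_sq_le (-1 / p)
  have hbound : ∀ᶠ r in atTop, ‖M r‖ ≤ (B + 1) * |2 * π - 0| := by
    filter_upwards [Metric.tendstoUniformly_iff.1 hconv (1 / 2) (by norm_num)] with r hr
    refine intervalIntegral.norm_integral_le_of_norm_le_const fun x _ => ?_
    have hx := hr x
    rw [dist_comm, Real.dist_eq, abs_lt] at hx
    have h1 := hB (K x r) ⟨by linarith, by linarith⟩
    rw [Real.norm_eq_abs, abs_mul]
    have h2 : |K x r ^ (-1 / p)| ≤ B + 1 := abs_le_of_sq_le_sq (by nlinarith) (by linarith)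
    calc _ ≤ (B + 1) * 1 := by
          gcongr
          exact he1 x
      _ = B + 1 := mul_one _
  have hlim : Tendsto (fun r => M r * Real.exp (-r)) atTop (nhds 0) := by
    have := (Real.tendsto_exp_neg_atTop_nhds_zero).zero_mul_isBoundedUnder_le
      (g := M) (isBoundedUnder_of_eventually_le hbound)
    simpa only [mul_comm] using this
  have h2 : Tendsto (fun r => M r * Real.exp (-r)) atTop (nhds (M s * Real.exp (-s))) :=
    tendsto_const_nhds.congr' (by
      filter_upwards [eventually_ge_atTop s] with r hr using (hconst r hr).symm)
  have h3 := tendsto_nhds_unique h2 hlim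
  exact (mul_eq_zero.1 h3).resolve_right (Real.exp_pos _).ne'

theorem exists_energy_deriv_le (hK : IsNormalizedFlow p K) (hp : 1 ≤ p)
    (hconv : TendstoUniformly (fun s x => K x s) (fun _ => 1) atTop) {α : ℝ} (hα : 0 < α)
    (hα1 : α < 1) : ∃ T : ℝ, 0 < T ∧ (∀ s, T ≤ s → ∀ x, |K x s - 1| ≤ 1 / 40) ∧
    ∃ C : ℝ, 0 ≤ C ∧ ∀ s, T ≤ s →
      energy (iteratedDeriv 1 (fun x => K x s)) ≤ C * Real.exp (-(4 * α * p) * s) := by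
  obtain ⟨δ, hδ, hmain⟩ := exists_integral_deriv_mul_flowRHS_le hp (α := (α + 1) / 2)
    (by linarith) (by linarith)
  obtain ⟨T, hT⟩ := eventually_atTop.1
    (Metric.tendstoUniformly_iff.1 hconv (min δ (1 / 40)) (by positivity))
  have hclose : ∀ s, max T 1 ≤ s → ∀ x, |K x s - 1| < min δ (1 / 40) := fun s hs x => by
    have := hT s ((le_max_left _ _).trans hs) x
    rwa [dist_comm, Real.dist_eq] at this
  have hT0 : 0 < max T 1 := lt_max_of_lt_right one_pos
  refine ⟨max T 1, hT0, fun s hs x => ((hclose s hs x).trans_le (min_le_right _ _)).le, ?_⟩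
  refine exists_le_exp_of_hasDerivAt_le (A := 4 * ((α + 1) / 2) * p) hT0.le ?_ le_rfl
    (fun s hs => hK.hasDerivAt_energy 1 (hT0.trans_le hs)) fun s hs => ?_
  · have : 0 < (1 - α) * p := mul_pos (by linarith) (by linarith)
    linarith
  · have hs0 := hT0.trans_le hs
    have h := hmain (fun x => K x s) (hK.smoothPeriodic hs0.le)
      (fun x => (hclose s hs x).trans_le (min_le_left _ _)) (fun x => hK.pos x s hs0.le)
      (hK.integral_rpow_mul_eq_zero hp hconv SmoothPeriodic.cos (by simp [Real.deriv_sin])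
        Real.abs_cos_le_one hs0)
      (hK.integral_rpow_mul_eq_zero hp hconv SmoothPeriodic.sin (by simp) Real.abs_sin_le_one hs0)
    simp only [iteratedDeriv_one]
    linarith

theorem exists_energy_iteratedDeriv_le (hK : IsNormalizedFlow p K) (hp : 1 ≤ p) {b T C : ℝ}
    (hb : 0 ≤ b) (hT : 0 < T) (hclose : ∀ s, T ≤ s → ∀ x, |K x s - 1| ≤ 1 / 40) (hC : 0 ≤ C)
    (h1 : ∀ s, T ≤ s → energy (iteratedDeriv 1 (fun x => K x s)) ≤ C * Real.exp (-b * s)) (n : ℕ) :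
    ∃ D : ℝ, 0 ≤ D ∧ ∀ s, T ≤ s →
      energy (iteratedDeriv (n + 1) (fun x => K x s)) ≤ D * Real.exp (-b * s) := by
  induction n with
  | zero => exact ⟨C, hC, h1⟩
  | succ n ih =>
    obtain ⟨D, hD, ih⟩ := ih
    obtain ⟨C₁, hmain⟩ := exists_integral_iteratedDeriv_mul_flowRHS_le hp n D
    have hp0 : 0 < p := by linarith
    set L := 2 * |C₁| + (b + 1) with hL
    have hL0 : 0 < L := by positivity
    refine exists_le_exp_of_hasDerivAt_le (A := b + 1) (C := L ^ 2 / (2 * p) * D) hT.le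
      (by linarith) (by positivity)
      (fun s hs => hK.hasDerivAt_energy (n + 2) (hT.trans_le hs)) fun s hs => ?_
    have hs0 := hT.trans_le hs
    have hv := hK.smoothPeriodic hs0.le
    have hE1 := ih s hs
    have hexp : Real.exp (-b * s) ≤ 1 := Real.exp_le_one_iff.2 (by nlinarith)
    have hB : SobolevBound (deriv (fun x => K x s)) n D := fun j hj => by
      rw [← iteratedDeriv_succ']
      refine (hv.energy_iteratedDeriv_mono (by omega) (by omega : j + 1 ≤ n + 1)).trans
        (hE1.trans (mul_le_of_le_one_right hD hexp))
    have hm := hmain _ hv (hclose s hs) hB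
    have hi := (hv.iteratedDeriv (n + 1)).energy_deriv_interpolation
      (by positivity : 0 < p / (2 * L))
    rw [← iteratedDeriv_succ, ← iteratedDeriv_succ] at hi
    have h2 := mul_le_mul_of_nonneg_left hi hL0.le
    have e1 : L * (p / (2 * L) * energy (iteratedDeriv (n + 3) (fun x => K x s)) +
        1 / (4 * (p / (2 * L))) * energy (iteratedDeriv (n + 1) (fun x => K x s))) =
        p / 2 * energy (iteratedDeriv (n + 3) (fun x => K x s)) +
        L ^ 2 / (2 * p) * energy (iteratedDeriv (n + 1) (fun x => K x s)) := by
      field_simp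
      ring
    rw [e1] at h2
    have h3 := mul_le_mul_of_nonneg_left hE1 (by positivity : 0 ≤ L ^ 2 / (2 * p))
    have h4 := mul_le_mul_of_nonneg_right (le_abs_self C₁)
      (energy_nonneg (iteratedDeriv (n + 2) (fun x => K x s)))
    have h5 : L * energy (iteratedDeriv (n + 2) (fun x => K x s)) =
        2 * (|C₁| * energy (iteratedDeriv (n + 2) (fun x => K x s))) +
        (b + 1) * energy (iteratedDeriv (n + 2) (fun x => K x s)) := by
      rw [hL]
      ring
    linarith

theorem exists_abs_iteratedDeriv_le (hK : IsNormalizedFlow p K) (hp : 1 ≤ p)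
    (hconv : TendstoUniformly (fun s x => K x s) (fun _ => 1) atTop) {l : ℕ} (hl : 1 ≤ l) {α : ℝ}
    (hα : 0 < α) (hα1 : α < 1) : ∃ C : ℝ, 0 < C ∧ ∀ s, 0 < s → ∀ x,
      |iteratedDeriv l (fun y => K y s) x| ≤ C * Real.exp (-2 * α * p * s) := by
  obtain ⟨T, hT, hclose, C, hC, h1⟩ := hK.exists_energy_deriv_le hp hconv hα hα1
  have hb : 0 ≤ 4 * α * p := by positivity
  obtain ⟨n, rfl⟩ := Nat.exists_eq_add_of_le' hl
  obtain ⟨D₁, hD₁, hE₁⟩ := hK.exists_energy_iteratedDeriv_le hp hb hT hclose hC h1 n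
  obtain ⟨D₂, hD₂, hE₂⟩ := hK.exists_energy_iteratedDeriv_le hp hb hT hclose hC h1 (n + 1)
  obtain ⟨M, hM⟩ := (hK.smooth.iteratedDeriv (n + 1)).exists_abs_le
    (fun s hs => ((hK.smoothPeriodic hs).iteratedDeriv (n + 1)).2) T
  set D := √(2 * (D₁ + D₂)) with hD
  have hM' : 0 ≤ |M| * Real.exp (2 * α * p * T) := by positivity
  refine ⟨D + |M| * Real.exp (2 * α * p * T) + 1, by positivity, fun s hs x => ?_⟩
  rcases le_total T s with hTs | hTs
  · have h2 := ((hK.smoothPeriodic hs.le).iteratedDeriv (n + 1)).sq_le x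
    rw [← iteratedDeriv_succ] at h2
    have h3 := hE₁ s hTs
    have h4 := hE₂ s hTs
    have e1 : Real.exp (-(4 * α * p) * s) = Real.exp (-2 * α * p * s) ^ 2 := by
      rw [← Real.exp_nat_mul]
      ring_nf
    have e2 : D ^ 2 = 2 * (D₁ + D₂) := Real.sq_sqrt (by positivity)
    refine (abs_le_of_sq_le_sq (b := D * Real.exp (-2 * α * p * s)) ?_ (by positivity)).trans ?_
    · rw [mul_pow, e2, ← e1]
      linarith
    · gcongr
      linarith
  · have h2 := hM x s ⟨hs.le, hTs⟩
    have e1 : 1 ≤ Real.exp (2 * α * p * T) * Real.exp (-2 * α * p * s) := by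
      rw [← Real.exp_add]
      refine Real.one_le_exp ?_
      have := mul_le_mul_of_nonneg_left hTs (by positivity : 0 ≤ 2 * α * p)
      linarith
    calc _ ≤ |M| * 1 := by rw [mul_one]; exact h2.trans (le_abs_self M)
      _ ≤ |M| * (Real.exp (2 * α * p * T) * Real.exp (-2 * α * p * s)) := by gcongr
      _ = |M| * Real.exp (2 * α * p * T) * Real.exp (-2 * α * p * s) := by ring
      _ ≤ _ := by
        gcongr
        have : 0 ≤ D := Real.sqrt_nonneg _
        linarith

end IsNormalizedFlow

/-- Proposition 2.1: every angular derivative of the normalized curvature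
decays exponentially, with rate arbitrarily close to `2p`. -/
theorem all_derivatives_sup_decay
    (p : ℝ) (hp : 1 ≤ p) (K : ℝ → ℝ → ℝ)
    (hsmooth : ContDiffOn ℝ (⊤ : ℕ∞) (fun q : ℝ × ℝ => K q.1 q.2) (univ ×ˢ Ici 0))
    (hper : ∀ τ : ℝ, Function.Periodic (fun θ => K θ τ) (2 * π))
    (hpos : ∀ θ τ : ℝ, 0 ≤ τ → 0 < K θ τ)
    (hpde : ∀ θ : ℝ, ∀ τ ∈ Ioi (0:ℝ),
      deriv (fun s => K θ s) τ =
        p * K θ τ ^ (1 + 1 / p) * deriv (deriv (fun x => K x τ)) θ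
          + p * K θ τ ^ (2 + 1 / p) - p * K θ τ)
    (hconv : TendstoUniformly (fun τ θ => K θ τ) (fun _ => 1) atTop) :
    ∀ l : ℕ, 1 ≤ l → ∀ α : ℝ, 0 < α → α < 1 →
      ∃ C : ℝ, 0 < C ∧ ∀ τ : ℝ, 0 < τ → ∀ θ : ℝ,
        |iteratedDeriv l (fun x => K x τ) θ| ≤ C * Real.exp (-2 * α * p * τ) := by
  intro l hl α hα hα1
  exact IsNormalizedFlow.exists_abs_iteratedDeriv_le ⟨hsmooth, hper, hpos, hpde⟩ hp hconv hl hα hα1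
end
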